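/- For every one-clock TBPP ℬ and nonterminals S, T₁, …, Tₙ of ℬ, the exact reachability relation {(u, v₁, …, vₙ) ∈ ℝ≥0^{n+1} : {(S,u)} →* {(T₁,v₁), …, (Tₙ,vₙ)} (reaching exactly this multiset of processes)} is definable in existential linear arithmetic. -/

import Mathlib

/-!
Processes do not interact, so a run from a single process is a derivation tree `D`: a process either
waits, applies a rule, or becomes one of the targets at the end time (`run_of_D`, `D_of_run`). Clocks
are recorded by their birth times. It remains to define, in existential linear arithmetic, for which
remaining time `t`, initial clock and final clock values `v i` such a tree exists; the time `t` is
then quantified away.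

A derivation only compares integer translates of the end time, the current time and birth times. It
is therefore invariant under partial automorphisms of `(ℝ; ≤, x ↦ x + 1)` (`D.sim`), so only the
integer parts of the parameters and the order of their fractional parts matter (`D.retype`). There
are finitely many orders, each of them definable, and one fixes representatives of the fractional
parts for each.

With fractional parts fixed, let `info` record which nonterminals at time `0`, with which clock, can
be turned into which subset of the targets. Clocks of value at most the largest constant `K` are
recorded up to their position relative to the finitely many fractional parts, the clocks of the
targets are recorded by name, and all remaining clocks behave alike (`D.clip`); hence `info` takes
finitely many values. When the remaining time grows by one unit, the new value of `info` is determined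
by the old one and by how the integer parts compare with boundedly many thresholds (`D.strip`,
`infoAt_step`). So `info` is computed by a finite-state machine whose input is the set of thresholds
passed so far (`exists_machine`). Between two thresholds this machine is autonomous, so the durations
leading from one state to another form an eventually periodic set, and cutting a run at the thresholds
gives an existential definition (`Df.machine`).
-/

open scoped NNReal

namespace TBPPcore

/-- Comparison operators allowed in clock constraints. -/
inductive Cmp | lt | le | eq | ge | gt

/-- Satisfaction of a comparison between two nonnegative reals. -/
def Cmp.Sat : Cmp → ℝ≥0 → ℝ≥0 → Prop
  | .lt, a, b => a < b
  | .le, a, b => a ≤ b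
  | .eq, a, b => a = b
  | .ge, a, b => a ≥ b
  | .gt, a, b => a > b

/-- An atomic clock constraint `x ⋈ k`. -/
structure GuardAtom (C : Type) where
  clock : C
  cmp : Cmp
  bound : ℕ

/-- A clock valuation. -/
abbrev Val (C : Type) := C → ℝ≥0

/-- A guard is a (finite) conjunction of atomic clock constraints;
the empty list is the trivial constraint `true`. -/
def GuardSat {C : Type} (μ : Val C) (g : List (GuardAtom C)) : Prop :=
  ∀ a ∈ g, a.cmp.Sat (μ a.clock) (a.bound : ℝ≥0)

/-- An assignment `x := e` where `e` is a clock or a natural-number constant. -/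
structure Assign (C : Type) where
  lhs : C
  rhs : C ⊕ ℕ

def applyAssign {C : Type} [DecidableEq C] (μ : Val C) (a : Assign C) : Val C :=
  Function.update μ a.lhs (Sum.elim μ (fun k => (k : ℝ≥0)) a.rhs)

/-- Execute a sequence of assignments in order. -/
def applyUpdates {C : Type} [DecidableEq C] (μ : Val C) (U : List (Assign C)) : Val C :=
  U.foldl applyAssign μ

/-- A rule `A →(φ; U) α`. -/
structure Rule (C X : Type) where
  src : X
  guard : List (GuardAtom C)
  update : List (Assign C)
  rhs : Multiset X

/-- A timed basic parallel process: a finite set of rules whose right-hand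
sides have size at most 2 (clocks `C` and nonterminals `X` are type
parameters; finiteness of the nonterminal set is imposed where needed). -/
structure TBPP (C X : Type) where
  rules : Set (Rule C X)
  finite : rules.Finite
  small : ∀ r ∈ rules, Multiset.card r.rhs ≤ 2

/-- A configuration: a finite multiset of processes. -/
abbrev Config (C X : Type) := Multiset (X × Val C)

/-- Elapse `t` time units in every process of a configuration. -/
def shift {C X : Type} (t : ℝ≥0) (α : Config C X) : Config C X :=
  α.map (fun p => (p.1, fun c => p.2 c + t))

variable {C X : Type} [DecidableEq C]

/-- One transition: either a time elapse or a discrete rule application. -/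
inductive Step (B : TBPP C X) : Config C X → ℝ≥0 → Config C X → Prop
  | elapse (α : Config C X) (t : ℝ≥0) : Step B α t (shift t α)
  | discrete (β : Config C X) (r : Rule C X) (μ : Val C)
      (hr : r ∈ B.rules) (hg : GuardSat μ r.guard) :
      Step B (β + {(r.src, μ)}) 0
        (β + r.rhs.map (fun Y => (Y, applyUpdates μ r.update)))

/-- `Run B α t β`: a finite sequence of transitions from `α` to `β`
whose delays sum to `t`. -/
inductive Run (B : TBPP C X) : Config C X → ℝ≥0 → Config C X → Prop
  | refl (α : Config C X) : Run B α 0 α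
  | tail {α β γ : Config C X} {t s : ℝ≥0} :
      Run B α t β → Step B β s γ → Run B α (t + s) γ

/-- `α →* β`. -/
def Reach (B : TBPP C X) (α β : Config C X) : Prop := ∃ t, Run B α t β

/-- Coverability: `α ↝cover β`. -/
def Cover (B : TBPP C X) (α β : Config C X) : Prop :=
  ∃ γ, Reach B α γ ∧ β ≤ γ

/-- A timed automaton is a TBPP all of whose rules have right-hand side of size 1. -/
def IsTA (B : TBPP C X) : Prop := ∀ r ∈ B.rules, Multiset.card r.rhs = 1

/-- The valuation of a single clock. -/
def cval (u : ℝ≥0) : Val Unit := fun _ => u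

end TBPPcore
namespace ELA

/-- Terms over the structure `(ℝ; 0, 1, +, ≤, ⌊·⌋)` with `n` free variables. -/
inductive Term (n : ℕ) : Type
  | var : Fin n → Term n
  | zero : Term n
  | one : Term n
  | add : Term n → Term n → Term n
  | floor : Term n → Term n

noncomputable def Term.eval {n : ℕ} (v : Fin n → ℝ) : Term n → ℝ
  | .var i => v i
  | .zero => 0
  | .one => 1
  | .add s t => s.eval v + t.eval v
  | .floor t => (⌊t.eval v⌋ : ℝ)

/-- Existential formulas of linear arithmetic: literals `s ≤ t` and
`¬(s ≤ t)`, closed under `∧`, `∨` and existential quantification. -/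
inductive Form : ℕ → Type
  | le {n : ℕ} : Term n → Term n → Form n
  | nle {n : ℕ} : Term n → Term n → Form n
  | and {n : ℕ} : Form n → Form n → Form n
  | or {n : ℕ} : Form n → Form n → Form n
  | ex {n : ℕ} : Form (n + 1) → Form n

def Form.Sat : ∀ {n : ℕ}, Form n → (Fin n → ℝ) → Prop
  | _, .le s t, v => s.eval v ≤ t.eval v
  | _, .nle s t, v => ¬ s.eval v ≤ t.eval v
  | _, .and f g, v => f.Sat v ∧ g.Sat v
  | _, .or f g, v => f.Sat v ∨ g.Sat v
  | _, .ex f, v => ∃ r : ℝ, f.Sat (Fin.snoc v r)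

/-- A set `S ⊆ ℝⁿ` is definable in existential linear arithmetic if it is the
set of realizations of an existential formula of linear arithmetic. -/
def Definable (n : ℕ) (S : Set (Fin n → ℝ)) : Prop :=
  ∃ φ : Form n, S = {v | Form.Sat φ v}

end ELA

namespace OneClock

/-! ### Derivations and their invariance -/

/-- The birth time of a clock after an optional reset. A clock born at `β` reads `w - β` at time
`w`; the effect `none` leaves it alone, `some k` assigns `k` to it. -/
def upd (o : Option ℕ) (β w : ℝ) : ℝ := o.elim β (fun k => w - k)

/-- `D En tgt E γ A β w L`: a single nonterminal `A`, whose clock was born at absolute time `β`,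
can evolve from absolute time `w` to exactly the nonterminals `tgt i`, `i ∈ L`, at time `E`, the
clock of `tgt i` being born at `γ i`. `En A x o α` says that some rule `A → α` is enabled at clock
value `x` and has effect `o` on the clock. -/
inductive D {X ι : Type} (En : X → ℝ → Option ℕ → Multiset X → Prop) (tgt : ι → X)
    (E : ℝ) (γ : ι → ℝ) : X → ℝ → ℝ → Multiset ι → Prop
  | fin (i : ι) : D En tgt E γ (tgt i) (γ i) E {i}
  | elapse {A : X} {β w w' : ℝ} {L : Multiset ι} (h : w ≤ w') (d : D En tgt E γ A β w' L) :
      D En tgt E γ A β w L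
  | r0 {A : X} {β w : ℝ} {o : Option ℕ} (h : w ≤ E) (e : En A (w - β) o 0) :
      D En tgt E γ A β w 0
  | r1 {A B : X} {β w : ℝ} {o : Option ℕ} {L : Multiset ι} (e : En A (w - β) o {B})
      (d : D En tgt E γ B (upd o β w) w L) : D En tgt E γ A β w L
  | r2 {A B C : X} {β w : ℝ} {o : Option ℕ} {L₁ L₂ : Multiset ι} (e : En A (w - β) o {B, C})
      (d₁ : D En tgt E γ B (upd o β w) w L₁) (d₂ : D En tgt E γ C (upd o β w) w L₂) :
      D En tgt E γ A β w (L₁ + L₂)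

/-- All constants occurring in guards and assignments are at most `K`. -/
structure Bdd {X : Type} (K : ℕ) (En : X → ℝ → Option ℕ → Multiset X → Prop) : Prop where
  inv : ∀ {A : X} {x x' : ℝ} {o : Option ℕ} {α : Multiset X},
    (∀ k : ℕ, k ≤ K → ((x ≤ k ↔ x' ≤ k) ∧ ((k : ℝ) ≤ x ↔ (k : ℝ) ≤ x'))) →
    En A x o α → En A x' o α
  le : ∀ {A : X} {x : ℝ} {k : ℕ} {α : Multiset X}, En A x (some k) α → k ≤ K

section Sim

variable {X ι : Type} {En : X → ℝ → Option ℕ → Multiset X → Prop} {tgt : ι → X} {K : ℕ}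

theorem D.le_end {E : ℝ} {γ : ι → ℝ} {A : X} {β w : ℝ} {L : Multiset ι}
    (d : D En tgt E γ A β w L) : w ≤ E := by
  induction d with
  | fin i => exact le_rfl
  | elapse h _ ih => exact h.trans ih
  | r0 h _ => exact h
  | r1 _ _ ih => exact ih
  | r2 _ _ _ ih _ => exact ih

/-- A relation between two sets of time points, given as a set of pairs, that preserves and
reflects the order between all integer translates: a partial automorphism of `(ℝ; ≤, +1)`. -/
def PI (S : Set (ℝ × ℝ)) : Prop :=
  ∀ p ∈ S, ∀ q ∈ S, ∀ k : ℤ, p.1 ≤ q.1 + k ↔ p.2 ≤ q.2 + k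

theorem PI.mono {S S' : Set (ℝ × ℝ)} (h : PI S) (hs : S' ⊆ S) : PI S' :=
  fun p hp q hq k => h p (hs hp) q (hs hq) k

theorem PI.insert_shift {S : Set (ℝ × ℝ)} (h : PI S) {p : ℝ × ℝ} (hp : p ∈ S) (l : ℤ) :
    PI (insert (p.1 + l, p.2 + l) S) := by
  intro a ha b hb k
  rcases ha with rfl | ha <;> rcases hb with rfl | hb
  · constructor <;> intro <;> linarith
  · have := h p hp b hb (k - l)
    push_cast at this
    constructor <;> intro hh
    · have := this.1 (by simp at hh; linarith)
      simp; linarith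
    · have := this.2 (by simp at hh; linarith)
      simp; linarith
  · have := h a ha p hp (k + l)
    push_cast at this
    constructor <;> intro hh
    · have := this.1 (by simp at hh; linarith)
      simp; linarith
    · have := this.2 (by simp at hh; linarith)
      simp; linarith
  · exact h a ha b hb k

/-- One-point extension: `ℝ` is dense, so a finite partial automorphism can be extended to any
further point. -/
theorem PI.extend {S : Set (ℝ × ℝ)} (h : PI S) (hf : S.Finite) (hn : S.Nonempty) (v : ℝ) :
    ∃ v', PI (insert (v, v') S) := by
  by_cases hv : ∃ p ∈ S, ∃ k : ℤ, v = p.1 + k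
  · obtain ⟨p, hp, k, rfl⟩ := hv
    exact ⟨_, h.insert_shift hp k⟩
  push Not at hv
  have lo : ∀ p ∈ S, p.1 + ⌊v - p.1⌋ < v := fun p hp =>
    lt_of_le_of_ne (by have := Int.floor_le (v - p.1); linarith) (fun e => hv p hp _ e.symm)
  have hi : ∀ p ∈ S, v < p.1 + ⌊v - p.1⌋ + 1 := fun p hp => by
    have := Int.lt_floor_add_one (v - p.1); linarith
  obtain ⟨p₀, hp₀, hmax⟩ := Set.exists_max_image S (fun p => p.2 + ⌊v - p.1⌋) hf hn
  obtain ⟨q₀, hq₀, hmin⟩ := Set.exists_min_image S (fun p => p.2 + ⌊v - p.1⌋) hf hn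
  have key : p₀.2 + ⌊v - p₀.1⌋ < q₀.2 + ⌊v - q₀.1⌋ + 1 := by
    by_contra hc
    have := (h q₀ hq₀ p₀ hp₀ (⌊v - p₀.1⌋ - ⌊v - q₀.1⌋ - 1)).2 (by push_cast; linarith)
    push_cast at this
    linarith [lo p₀ hp₀, hi q₀ hq₀]
  obtain ⟨v', h1, h2⟩ := exists_between key
  have lo' : ∀ p ∈ S, p.2 + ⌊v - p.1⌋ < v' := fun p hp => (hmax p hp).trans_lt h1
  have hi' : ∀ p ∈ S, v' < p.2 + ⌊v - p.1⌋ + 1 := fun p hp => by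
    have := hmin p hp
    linarith
  have ca : ∀ p ∈ S, ∀ k : ℤ, (v ≤ p.1 + k ↔ v' ≤ p.2 + k) := by
    intro p hp k
    have a1 := lo p hp; have a2 := hi p hp; have a3 := lo' p hp; have a4 := hi' p hp
    rcases lt_or_ge ⌊v - p.1⌋ k with hk | hk
    · have : ((⌊v - p.1⌋ : ℤ) : ℝ) + 1 ≤ k := by exact_mod_cast hk
      constructor <;> intro <;> linarith
    · have : (k : ℝ) ≤ ((⌊v - p.1⌋ : ℤ) : ℝ) := by exact_mod_cast hk
      constructor <;> intro <;> linarith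
  have cb : ∀ p ∈ S, ∀ k : ℤ, (p.1 ≤ v + k ↔ p.2 ≤ v' + k) := by
    intro p hp k
    have a1 := lo p hp; have a2 := hi p hp; have a3 := lo' p hp; have a4 := hi' p hp
    rcases lt_or_ge ⌊v - p.1⌋ (-k) with hk | hk
    · have : ((⌊v - p.1⌋ : ℤ) : ℝ) + 1 ≤ -k := by exact_mod_cast hk
      constructor <;> intro <;> linarith
    · have : -(k : ℝ) ≤ ((⌊v - p.1⌋ : ℤ) : ℝ) := by exact_mod_cast hk
      constructor <;> intro <;> linarith
  refine ⟨v', ?_⟩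
  intro a ha b hb k
  rcases ha with rfl | ha <;> rcases hb with rfl | hb
  · constructor <;> intro <;> linarith
  · exact ca b hb k
  · exact cb a ha k
  · exact h a ha b hb k

theorem PI.le_iff {S : Set (ℝ × ℝ)} (h : PI S) {a b : ℝ × ℝ} (ha : a ∈ S) (hb : b ∈ S) :
    a.1 ≤ b.1 ↔ a.2 ≤ b.2 := by simpa using h a ha b hb 0

theorem PI.eq_iff {S : Set (ℝ × ℝ)} (h : PI S) {a b : ℝ × ℝ} (ha : a ∈ S) (hb : b ∈ S) :
    a.1 = b.1 ↔ a.2 = b.2 := by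
  rw [le_antisymm_iff, le_antisymm_iff, h.le_iff ha hb, h.le_iff hb ha]

/-- The pairs formed by the two end times and by the two birth times of each target. -/
def marks (E E' : ℝ) (γ γ' : ι → ℝ) : Set (ℝ × ℝ) :=
  insert (E, E') (Set.range fun i => (γ i, γ' i))

/-- Derivability is invariant under partial automorphisms: guards and resets only involve integer
translates of the times at hand, and a time elapse is matched by a one-point extension. -/
theorem D.sim [Finite ι] (hK : Bdd K En) {E E' : ℝ} {γ γ' : ι → ℝ} {A : X} {β w : ℝ}
    {L : Multiset ι} (d : D En tgt E γ A β w L) :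
    ∀ {β' w' : ℝ}, PI (insert (β, β') (insert (w, w') (marks E E' γ γ'))) →
      D En tgt E' γ' A β' w' L := by
  have mem_E : ∀ b w' : ℝ × ℝ, (E, E') ∈ insert b (insert w' (marks E E' γ γ')) := by
    intro b w'; simp [marks]
  have guard : ∀ {β w β' w' : ℝ} {A o α},
      PI (insert (β, β') (insert (w, w') (marks E E' γ γ'))) →
      En A (w - β) o α → En A (w' - β') o α := by
    intro β w β' w' A o α h
    refine hK.inv fun k _ => ?_
    have h1 := h (w, w') (by simp) (β, β') (by simp) k
    have h2 := h (β, β') (by simp) (w, w') (by simp) (-k)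
    push_cast at h1 h2
    constructor
    · rw [sub_le_iff_le_add', sub_le_iff_le_add']; exact h1
    · rw [le_sub_iff_add_le', le_sub_iff_add_le', ← le_sub_iff_add_le, ← le_sub_iff_add_le]
      simpa [sub_eq_add_neg] using h2
  have reset : ∀ {β w β' w' : ℝ} (o : Option ℕ),
      PI (insert (β, β') (insert (w, w') (marks E E' γ γ'))) →
      PI (insert (upd o β w, upd o β' w') (insert (w, w') (marks E E' γ γ'))) := by
    intro β w β' w' o h
    cases o with
    | none => exact h
    | some k =>
      have h1 := (h.mono (Set.subset_insert _ _)).insert_shift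
        (p := (w, w')) (Set.mem_insert _ _) (-k)
      simpa [upd, sub_eq_add_neg] using h1
  induction d with
  | fin i =>
    intro β' w' h
    have e1 := (h.eq_iff (a := (E, w')) (b := (E, E')) (by simp) (mem_E _ _)).1 rfl
    have e2 := (h.eq_iff (a := (γ i, β')) (b := (γ i, γ' i)) (by simp)
      (by simp only [marks, Set.mem_insert_iff, Set.mem_range]; exact Or.inr (Or.inr (Or.inr ⟨i, rfl⟩)))).1 rfl
    simp only at e1 e2
    subst e1 e2
    exact D.fin i
  | @elapse A β w w₁ L hw _ ih =>
    intro β' w' h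
    obtain ⟨v', hv⟩ := h.extend (by
      refine Set.Finite.insert _ (Set.Finite.insert _ (Set.Finite.insert _ (Set.finite_range _))))
      (Set.insert_nonempty _ _) w₁
    have hle := (hv.le_iff (a := (w, w')) (b := (w₁, v')) (by simp) (by simp)).1 hw
    refine D.elapse hle (ih (hv.mono ?_))
    intro x hx
    simp only [Set.mem_insert_iff] at hx ⊢
    tauto
  | r0 hw e =>
    intro β' w' h
    exact D.r0 ((h.le_iff (a := (_, w')) (b := (E, E')) (by simp) (mem_E _ _)).1 hw) (guard h e)
  | r1 e _ ih =>
    intro β' w' h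
    exact D.r1 (guard h e) (ih (reset _ h))
  | r2 e _ _ ih₁ ih₂ =>
    intro β' w' h
    exact D.r2 (guard h e) (ih₁ (reset _ h)) (ih₂ (reset _ h))

theorem PI.swap {S S' : Set (ℝ × ℝ)} (h : PI S) (hs : ∀ p ∈ S', (p.2, p.1) ∈ S) : PI S' :=
  fun p hp q hq k => (h _ (hs p hp) _ (hs q hq) k).symm

theorem D.sim_iff [Finite ι] (hK : Bdd K En) {E E' : ℝ} {γ γ' : ι → ℝ} {A : X} {β w β' w' : ℝ}
    {L : Multiset ι} (h : PI (insert (β, β') (insert (w, w') (marks E E' γ γ')))) :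
    D En tgt E γ A β w L ↔ D En tgt E' γ' A β' w' L := by
  refine ⟨fun d => d.sim hK h, fun d => d.sim hK (h.swap ?_)⟩
  simp only [marks, Set.mem_insert_iff, Set.mem_range]
  rintro p (rfl | rfl | rfl | ⟨i, rfl⟩)
  · simp
  · simp
  · simp
  · exact Or.inr (Or.inr (Or.inr ⟨i, rfl⟩))

theorem D.translate [Finite ι] (hK : Bdd K En) (c : ℝ) {E : ℝ} {γ : ι → ℝ} {A : X} {β w : ℝ}
    {L : Multiset ι} :
    D En tgt (E + c) (fun i => γ i + c) A (β + c) (w + c) L ↔ D En tgt E γ A β w L := by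
  refine (D.sim_iff hK ?_).symm
  have : ∀ p ∈ insert (β, β + c) (insert (w, w + c) (marks E (E + c) γ (fun i => γ i + c))),
      p.2 = p.1 + c := by
    simp only [marks, Set.mem_insert_iff, Set.mem_range]
    rintro p (rfl | rfl | rfl | ⟨i, rfl⟩) <;> simp
  intro p hp q hq k
  rw [this p hp, this q hq]
  constructor <;> intro <;> linarith

/-- The exact value of a clock above all constants matters only if it survives to the end. -/
theorem D.clip (hK : Bdd K En) {E : ℝ} {γ : ι → ℝ} {A : X} {β w : ℝ}
    {L : Multiset ι} (d : D En tgt E γ A β w L) :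
    ∀ {β' : ℝ}, (K : ℝ) < w - β → (K : ℝ) < w - β' → (∀ i, β ≠ γ i) →
      D En tgt E γ A β' w L := by
  have guard : ∀ {x x' : ℝ} {A o α}, (K : ℝ) < x → (K : ℝ) < x' →
      En A x o α → En A x' o α := by
    intro x x' A o α h h'
    refine hK.inv fun k hk => ?_
    have : (k : ℝ) ≤ K := by exact_mod_cast hk
    constructor <;> constructor <;> intro <;> linarith
  induction d with
  | fin i => intro β' _ _ h; exact absurd rfl (h i)
  | elapse hw _ ih =>
    intro β' h1 h2 h3
    exact D.elapse hw (ih (by linarith) (by linarith) h3)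
  | r0 hw e =>
    intro β' h1 h2 h3
    exact D.r0 hw (guard h1 h2 e)
  | @r1 A B β w o L e d ih =>
    intro β' h1 h2 h3
    cases o with
    | none => exact D.r1 (guard h1 h2 e) (ih h1 h2 h3)
    | some k => exact D.r1 (guard h1 h2 e) d
  | @r2 A B C β w o L₁ L₂ e d₁ d₂ ih₁ ih₂ =>
    intro β' h1 h2 h3
    cases o with
    | none => exact D.r2 (guard h1 h2 e) (ih₁ h1 h2 h3) (ih₂ h1 h2 h3)
    | some k => exact D.r2 (guard h1 h2 e) d₁ d₂

/-- Birth times `β` and `β'`, in two systems with target birth times `γ` and `γ'`, that look alike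
during `[-1, 0]`: both belong to the same target, or they are equal and recent, or both clocks
exceed `K` throughout and belong to no target. -/
def Mt (K : ℕ) (γ γ' : ι → ℝ) (β β' : ℝ) : Prop :=
  (∃ i, β = γ i ∧ β' = γ' i) ∨ (β = β' ∧ -(K : ℝ) - 1 ≤ β) ∨
    (β < -(K : ℝ) - 1 ∧ β' < -(K : ℝ) - 1 ∧ (∀ i, β ≠ γ i) ∧ ∀ i, β' ≠ γ' i)

/-- If two systems agree at time `0`, and their parameters look alike near `[-1, 0]`, then they
agree at time `-1`. -/
theorem D.strip (hK : Bdd K En) {U : Multiset ι} {E E' : ℝ} {γ γ' : ι → ℝ}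
    (h1 : E = E' ∨ (0 ≤ E ∧ 0 ≤ E'))
    (h2 : ∀ i, γ i = γ' i ∨ (γ i < -(K : ℝ) - 1 ∧ γ' i < -(K : ℝ) - 1) ∨ (0 < γ i ∧ 0 < γ' i))
    (h3 : ∀ i j, γ i = γ j → γ' i = γ' j)
    (J1 : ∀ A, ∀ L ≤ U, ∀ β : ℝ, -(K : ℝ) ≤ β → β ≤ 0 →
      D En tgt E γ A β 0 L → D En tgt E' γ' A β 0 L)
    (J2 : ∀ A, ∀ L ≤ U, ∀ i, γ i ≤ 0 → D En tgt E γ A (γ i) 0 L → D En tgt E' γ' A (γ' i) 0 L)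
    (J3 : ∀ A, ∀ L ≤ U, ∀ β β' : ℝ, β < -(K : ℝ) → β' < -(K : ℝ) → (∀ i, β ≠ γ i) →
      (∀ i, β' ≠ γ' i) → D En tgt E γ A β 0 L → D En tgt E' γ' A β' 0 L)
    {A : X} {β w : ℝ} {L : Multiset ι} (d : D En tgt E γ A β w L) :
    ∀ {β' : ℝ}, L ≤ U → -1 ≤ w → w ≤ 0 → β ≤ w → Mt K γ γ' β β' → D En tgt E' γ' A β' w L := by
  -- at time `0` a derivation is handed over to the assumed agreement `J1`, `J2`, `J3`
  have exit : ∀ {A β β' L}, L ≤ U → β ≤ 0 → Mt K γ γ' β β' → D En tgt E γ A β 0 L →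
      D En tgt E' γ' A β' 0 L := by
    intro A β β' L hL hβ hm hd
    rcases hm with ⟨i, rfl, rfl⟩ | ⟨rfl, hb⟩ | ⟨a, b, c, e⟩
    · exact J2 A L hL i hβ hd
    · rcases le_or_gt (-(K : ℝ)) β with hk | hk
      · exact J1 A L hL β hk hβ hd
      · by_cases hg : ∃ i, β = γ i
        · obtain ⟨i, rfl⟩ := hg
          have : γ i = γ' i := by
            rcases h2 i with h | h | h
            · exact h
            · linarith [h.1]
            · linarith [h.1]
          have := J2 A L hL i hβ hd
          simp_all
        · push Not at hg
          refine J3 A L hL β β hk hk hg (fun i hi => hg i ?_) hd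
          rcases h2 i with h | h | h
          · rw [h, hi]
          · linarith [h.2]
          · linarith [h.2]
    · exact J3 A L hL β β' (by linarith) (by linarith) c e hd
  have guard : ∀ {A β β' w o α}, -1 ≤ w → w ≤ 0 → β ≤ w → Mt K γ γ' β β' →
      En A (w - β) o α → En A (w - β') o α := by
    intro A β β' w o α hw hw' hβ hm
    refine hK.inv fun k hk => ?_
    have hk' : (k : ℝ) ≤ K := by exact_mod_cast hk
    have big : β < -(K : ℝ) - 1 → β' < -(K : ℝ) - 1 →
        ((w - β ≤ k ↔ w - β' ≤ k) ∧ ((k : ℝ) ≤ w - β ↔ (k : ℝ) ≤ w - β')) := by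
      intro a b
      constructor <;> constructor <;> intro <;> linarith
    rcases hm with ⟨i, rfl, rfl⟩ | ⟨rfl, hb⟩ | ⟨a, b, c, e⟩
    · rcases h2 i with h | h | h
      · rw [h]; simp
      · exact big h.1 h.2
      · linarith [h.1]
    · simp
    · exact big a b
  have reset : ∀ {A x β β' w o α}, -1 ≤ w → En A x o α → Mt K γ γ' β β' →
      Mt K γ γ' (upd o β w) (upd o β' w) := by
    intro A x β β' w o α hw he hm
    cases o with
    | none => exact hm
    | some k =>
      have : (k : ℝ) ≤ K := by exact_mod_cast hK.le he
      exact Or.inr (Or.inl ⟨rfl, by simp [upd]; linarith⟩)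
  have updle : ∀ {β w : ℝ} (o : Option ℕ), β ≤ w → upd o β w ≤ w := by
    intro β w o h
    cases o with
    | none => exact h
    | some k => simp [upd]
  induction d with
  | fin i =>
    intro β' hL hw hw' hβ hm
    rcases h1 with rfl | h1
    · have : β' = γ' i := by
        rcases hm with ⟨j, e, rfl⟩ | ⟨e, hb⟩ | ⟨a, b, c, e⟩
        · exact (h3 i j e).symm
        · rcases h2 i with h | h | h
          · rw [← h, e]
          · linarith [h.1]
          · linarith [h.1]
        · exact absurd rfl (c i)
      rw [this]
      exact D.fin i
    · have h0 : E = 0 := le_antisymm hw' h1.1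
      have d := D.fin (En := En) (tgt := tgt) (E := E) (γ := γ) i
      subst h0
      exact exit hL hβ hm d
  | @elapse A β w w' L hww d ih =>
    intro β' hL hw hw' hβ hm
    rcases le_or_gt w' 0 with h | h
    · exact D.elapse hww (ih hL (by linarith) h (by linarith) hm)
    · exact D.elapse hw' (exit hL (by linarith) hm (D.elapse h.le d))
  | r0 hE e =>
    intro β' hL hw hw' hβ hm
    refine D.r0 ?_ (guard hw hw' hβ hm e)
    rcases h1 with rfl | h1
    · exact hE
    · linarith [h1.2]
  | @r1 A B β w o L e d ih =>
    intro β' hL hw hw' hβ hm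
    exact D.r1 (guard hw hw' hβ hm e) (ih hL hw hw' (updle o hβ) (reset hw e hm))
  | @r2 A B C β w o L₁ L₂ e d₁ d₂ ih₁ ih₂ =>
    intro β' hL hw hw' hβ hm
    exact D.r2 (guard hw hw' hβ hm e)
      (ih₁ ((Multiset.le_add_right _ _).trans hL) hw hw' (updle o hβ) (reset hw e hm))
      (ih₂ ((Multiset.le_add_left _ _).trans hL) hw hw' (updle o hβ) (reset hw e hm))

end Sim

/-! ### Closure properties of definable sets -/

section Definability

variable {n : ℕ}

/-- `P` is definable in existential linear arithmetic. -/
def Df (P : (Fin n → ℝ) → Prop) : Prop := ELA.Definable n {v | P v}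

/-- `f` is given by a term. -/
def Tm (f : (Fin n → ℝ) → ℝ) : Prop := ∃ t : ELA.Term n, ∀ v, t.eval v = f v

/-- The integer-valued function `f` is given by a term. -/
def TmZ (f : (Fin n → ℝ) → ℤ) : Prop := Tm fun v => (f v : ℝ)

theorem Tm.var (i : Fin n) : Tm fun v : Fin n → ℝ => v i := ⟨.var i, fun _ => rfl⟩

theorem Tm.add {f g : (Fin n → ℝ) → ℝ} (hf : Tm f) (hg : Tm g) : Tm fun v => f v + g v := by
  obtain ⟨s, hs⟩ := hf
  obtain ⟨t, ht⟩ := hg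
  exact ⟨.add s t, fun v => by simp [ELA.Term.eval, hs, ht]⟩

theorem Tm.nat (k : ℕ) : Tm fun _ : Fin n → ℝ => (k : ℝ) := by
  induction k with
  | zero => exact ⟨.zero, fun v => by simp [ELA.Term.eval]⟩
  | succ k ih =>
    have := ih.add (⟨.one, fun v => rfl⟩ : Tm fun _ : Fin n → ℝ => (1 : ℝ))
    simpa using this

theorem Tm.nat_mul (k : ℕ) {f : (Fin n → ℝ) → ℝ} (hf : Tm f) : Tm fun v => (k : ℝ) * f v := by
  induction k with
  | zero => simpa using Tm.nat 0
  | succ k ih =>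
    have := ih.add hf
    simpa [add_mul] using this

theorem Tm.floor {f : (Fin n → ℝ) → ℝ} (hf : Tm f) : TmZ fun v => ⌊f v⌋ := by
  obtain ⟨s, hs⟩ := hf
  exact ⟨.floor s, fun v => by simp [ELA.Term.eval, hs]⟩

theorem TmZ.add {f g : (Fin n → ℝ) → ℤ} (hf : TmZ f) (hg : TmZ g) : TmZ fun v => f v + g v := by
  have := Tm.add hf hg
  simpa [TmZ] using this

theorem TmZ.nat (k : ℕ) : TmZ fun _ : Fin n → ℝ => (k : ℤ) := by
  simpa [TmZ] using Tm.nat k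

/-- Terms may be used in a context with one further variable. -/
theorem Tm.lift {f : (Fin n → ℝ) → ℝ} (hf : Tm f) :
    Tm fun w : Fin (n + 1) → ℝ => f (fun i => w i.castSucc) := by
  obtain ⟨s, hs⟩ := hf
  suffices ∃ t : ELA.Term (n + 1), ∀ w, t.eval w = s.eval (fun i => w i.castSucc) by
    obtain ⟨t, ht⟩ := this
    exact ⟨t, fun w => by rw [ht, hs]⟩
  clear hs
  induction s with
  | var i => exact ⟨.var i.castSucc, fun _ => rfl⟩
  | zero => exact ⟨.zero, fun _ => rfl⟩
  | one => exact ⟨.one, fun _ => rfl⟩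
  | add a b iha ihb =>
    obtain ⟨a', ha⟩ := iha
    obtain ⟨b', hb⟩ := ihb
    exact ⟨.add a' b', fun w => by simp [ELA.Term.eval, ha, hb]⟩
  | floor a iha =>
    obtain ⟨a', ha⟩ := iha
    exact ⟨.floor a', fun w => by simp [ELA.Term.eval, ha]⟩

theorem Df.congr {P Q : (Fin n → ℝ) → Prop} (h : Df P) (e : ∀ v, Q v ↔ P v) : Df Q := by
  have : Q = P := funext fun v => propext (e v)
  rwa [this]

theorem Df.le {f g : (Fin n → ℝ) → ℝ} (hf : Tm f) (hg : Tm g) : Df fun v => f v ≤ g v := by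
  obtain ⟨s, hs⟩ := hf
  obtain ⟨t, ht⟩ := hg
  exact ⟨.le s t, by ext v; simp [ELA.Form.Sat, hs, ht]⟩

theorem Df.lt {f g : (Fin n → ℝ) → ℝ} (hf : Tm f) (hg : Tm g) : Df fun v => f v < g v := by
  obtain ⟨s, hs⟩ := hf
  obtain ⟨t, ht⟩ := hg
  exact ⟨.nle t s, by ext v; simp [ELA.Form.Sat, hs, ht]⟩

theorem Df.and {P Q : (Fin n → ℝ) → Prop} (hP : Df P) (hQ : Df Q) : Df fun v => P v ∧ Q v := by
  obtain ⟨φ, h⟩ := hP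
  obtain ⟨ψ, h'⟩ := hQ
  refine ⟨.and φ ψ, ?_⟩
  ext v
  have h1 := Set.ext_iff.1 h v
  have h2 := Set.ext_iff.1 h' v
  simp only [Set.mem_ofPred_eq] at h1 h2
  simp [ELA.Form.Sat, h1, h2]

theorem Df.or {P Q : (Fin n → ℝ) → Prop} (hP : Df P) (hQ : Df Q) : Df fun v => P v ∨ Q v := by
  obtain ⟨φ, h⟩ := hP
  obtain ⟨ψ, h'⟩ := hQ
  refine ⟨.or φ ψ, ?_⟩
  ext v
  have h1 := Set.ext_iff.1 h v
  have h2 := Set.ext_iff.1 h' v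
  simp only [Set.mem_ofPred_eq] at h1 h2
  simp [ELA.Form.Sat, h1, h2]

theorem Df.ex {P : (Fin (n + 1) → ℝ) → Prop} (hP : Df P) :
    Df fun v : Fin n → ℝ => ∃ r : ℝ, P (Fin.snoc v r) := by
  obtain ⟨φ, h⟩ := hP
  refine ⟨.ex φ, ?_⟩
  ext v
  simp only [Set.mem_ofPred_eq, ELA.Form.Sat]
  refine exists_congr fun r => ?_
  exact Set.ext_iff.1 h (Fin.snoc v r)

theorem Df.eq {f g : (Fin n → ℝ) → ℝ} (hf : Tm f) (hg : Tm g) : Df fun v => f v = g v :=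
  ((Df.le hf hg).and (Df.le hg hf)).congr fun _ => le_antisymm_iff

theorem Df.prop (p : Prop) : Df fun _ : Fin n → ℝ => p := by
  by_cases hp : p
  · exact (Df.le (Tm.nat 0) (Tm.nat 0)).congr fun _ => by simp [hp]
  · exact (Df.lt (Tm.nat 0) (Tm.nat 0)).congr fun _ => by simp [hp]

theorem Df.exists_finite {κ : Type} [Finite κ] {P : κ → (Fin n → ℝ) → Prop}
    (h : ∀ k, Df (P k)) : Df fun v => ∃ k, P k v := by
  classical
  cases nonempty_fintype κ
  have : ∀ A : Finset κ, Df fun v => ∃ k ∈ A, P k v := by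
    intro A
    induction A using Finset.induction_on with
    | empty => exact (Df.prop False).congr fun _ => by simp
    | insert a A _ ih => exact ((h a).or ih).congr fun _ => by simp
  exact (this Finset.univ).congr fun _ => by simp

theorem Df.forall_finite {κ : Type} [Finite κ] {P : κ → (Fin n → ℝ) → Prop}
    (h : ∀ k, Df (P k)) : Df fun v => ∀ k, P k v := by
  classical
  cases nonempty_fintype κ
  have : ∀ A : Finset κ, Df fun v => ∀ k ∈ A, P k v := by
    intro A
    induction A using Finset.induction_on with
    | empty => exact (Df.prop True).congr fun _ => by simp
    | insert a A _ ih => exact ((h a).and ih).congr fun _ => by simp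
  exact (this Finset.univ).congr fun _ => by simp

/-- It is definable whether `f ≤ g` has a prescribed truth value `p`. -/
theorem Df.le_iff {f g : (Fin n → ℝ) → ℝ} (hf : Tm f) (hg : Tm g) (p : Prop) :
    Df fun v => (f v ≤ g v ↔ p) := by
  by_cases hp : p
  · exact (Df.le hf hg).congr fun _ => by simp [hp]
  · exact (Df.lt hg hf).congr fun _ => by simp [hp]

theorem Df.leZ {f g : (Fin n → ℝ) → ℤ} (hf : TmZ f) (hg : TmZ g) : Df fun v => f v ≤ g v :=
  (Df.le hf hg).congr fun _ => by simp

theorem Df.ltZ {f g : (Fin n → ℝ) → ℤ} (hf : TmZ f) (hg : TmZ g) : Df fun v => f v < g v :=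
  (Df.lt hf hg).congr fun _ => by simp

theorem Df.eqZ {f g : (Fin n → ℝ) → ℤ} (hf : TmZ f) (hg : TmZ g) : Df fun v => f v = g v :=
  (Df.eq hf hg).congr fun _ => by simp

theorem Df.eqZ_iff {f g : (Fin n → ℝ) → ℤ} (hf : TmZ f) (hg : TmZ g) (p : Prop) :
    Df fun v => (f v = g v ↔ p) := by
  by_cases hp : p
  · exact (Df.eqZ hf hg).congr fun _ => by simp [hp]
  · exact ((Df.ltZ hf hg).or (Df.ltZ hg hf)).congr fun _ => by simp [hp, lt_or_lt_iff_ne]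

/-- Eventually periodic sets of differences are definable. -/
theorem Df.periodic {f g : (Fin n → ℝ) → ℤ} (hf : TmZ f) (hg : TmZ g) {E : ℕ → Prop} {a p : ℕ}
    (hp : 0 < p) (hE : ∀ d, a ≤ d → (E (d + p) ↔ E d)) :
    Df fun v => ∃ d : ℕ, g v = f v + d ∧ E d := by
  have hE' : ∀ k d, a ≤ d → (E (d + p * k) ↔ E d) := by
    intro k
    induction k with
    | zero => simp
    | succ k ih =>
      intro d hd
      rw [mul_add, mul_one, ← add_assoc, hE _ (by omega), ih d hd]
  -- small differences are listed; from `a` on the difference is `a + r + p * x` for an integer `x`,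
  -- where `x ≤ ⌊x⌋` expresses that the real `x` is an integer
  have h1 : Df fun v => ∃ d : Fin a, g v = f v + ((d : ℕ) : ℤ) ∧ E d :=
    Df.exists_finite fun d => (Df.eqZ hg (hf.add (TmZ.nat d))).and (Df.prop _)
  have h2 : Df fun v => ∃ r : Fin p, E (a + r) ∧
      ∃ x : ℝ, (0 ≤ x ∧ x ≤ ⌊x⌋) ∧ (g v : ℝ) = (f v + ((a + r : ℕ) : ℝ)) + (p : ℝ) * x := by
    refine Df.exists_finite fun r => (Df.prop _).and ?_
    have hx : Tm fun w : Fin (n + 1) → ℝ => w (Fin.last n) := Tm.var _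
    have := Df.ex ((((Df.le (Tm.nat 0) hx).and (Df.le hx (Tm.floor hx)))).and
      (Df.eq (Tm.lift hg) (((Tm.lift hf).add (Tm.nat (a + r))).add (Tm.nat_mul p hx))))
    refine this.congr fun v => ?_
    simp
  refine (h1.or h2).congr fun v => ?_
  constructor
  · rintro ⟨d, hd, hEd⟩
    rcases lt_or_ge d a with h | h
    · exact Or.inl ⟨⟨d, h⟩, hd, hEd⟩
    · right
      have hdec : d = (a + (d - a) % p) + p * ((d - a) / p) := by
        have := Nat.mod_add_div (d - a) p
        omega
      refine ⟨⟨(d - a) % p, Nat.mod_lt _ hp⟩, ?_, (((d - a) / p : ℕ) : ℝ), ⟨by positivity, ?_⟩, ?_⟩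
      · rw [hdec] at hEd
        exact (hE' _ _ (by omega)).1 hEd
      · rw [Int.floor_natCast, Int.cast_natCast]
      · rw [hd]
        push_cast
        have : (d : ℝ) = (((a + (d - a) % p) + p * ((d - a) / p) : ℕ) : ℝ) := by
          exact_mod_cast hdec
        rw [this]
        push_cast
        ring
  · rintro (⟨d, hd, hEd⟩ | ⟨r, hr, x, ⟨h0, hx⟩, hg⟩)
    · exact ⟨d, hd, hEd⟩
    · have hx' : x = ((⌊x⌋ : ℤ) : ℝ) := le_antisymm hx (Int.floor_le x)
      obtain ⟨k, hk⟩ := Int.eq_ofNat_of_zero_le (Int.floor_nonneg.2 h0)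
      rw [hk] at hx'
      rw [hx'] at hg
      refine ⟨(a + r) + p * k, ?_, (hE' _ _ (by omega)).2 hr⟩
      have : (g v : ℝ) = ((f v + ((a + r + p * k : ℕ) : ℤ) : ℤ) : ℝ) := by
        rw [hg]; push_cast; ring
      exact_mod_cast this

end Definability

/-! ### Finite-state machines with thresholds -/

section Machine

variable {σ : Type}

/-- Run the non-autonomous machine `f` for a number of steps from time `a`. -/
def rn (f : ℤ → σ → σ) : ℤ → ℕ → σ → σ
  | _, 0, s => s
  | a, d + 1, s => rn f (a + 1) d (f a s)

theorem rn_add (f : ℤ → σ → σ) (d e : ℕ) :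
    ∀ (a : ℤ) (s : σ), rn f a (d + e) s = rn f (a + d) e (rn f a d s) := by
  induction d with
  | zero => intro a s; simp [rn]
  | succ d ih =>
    intro a s
    rw [show d + 1 + e = (d + e) + 1 by omega]
    simp only [rn]
    rw [ih]
    push_cast
    rw [add_assoc a 1, add_comm (1 : ℤ)]

theorem rn_succ (f : ℤ → σ → σ) (a : ℤ) (d : ℕ) (s : σ) :
    rn f a (d + 1) s = f (a + d) (rn f a d s) := by
  rw [rn_add]; rfl

theorem rn_congr {f g : ℤ → σ → σ} (d : ℕ) :
    ∀ (a : ℤ) (s : σ), (∀ j, a ≤ j → j < a + d → f j = g j) → rn f a d s = rn g a d s := by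
  induction d with
  | zero => intro a s _; rfl
  | succ d ih =>
    intro a s h
    simp only [rn]
    rw [h a le_rfl (by push_cast; omega)]
    exact ih _ _ fun j h1 h2 => h j (by omega) (by push_cast; omega)

theorem rn_const (F : σ → σ) (d : ℕ) : ∀ (a : ℤ) (s : σ), rn (fun _ => F) a d s = F^[d] s := by
  induction d with
  | zero => intro a s; rfl
  | succ d ih => intro a s; simp only [rn]; rw [ih]; rfl

/-- The machine `f` leads from state `s` at time `a` to state `s'` at time `b`. -/
def Leads (f : ℤ → σ → σ) (s : σ) (a : ℤ) (s' : σ) (b : ℤ) : Prop :=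
  ∃ d : ℕ, b = a + d ∧ rn f a d s = s'

theorem Leads.congr {f g : ℤ → σ → σ} {s s' : σ} {a b : ℤ}
    (h : ∀ j, a ≤ j → j < b → f j = g j) : Leads f s a s' b ↔ Leads g s a s' b := by
  refine exists_congr fun d => and_congr_right fun hd => ?_
  rw [rn_congr d a s fun j h1 h2 => h j h1 (hd ▸ h2)]

theorem Leads.split {f : ℤ → σ → σ} {s s' : σ} {a b c : ℤ} (h1 : a ≤ c) (h2 : c ≤ b) :
    Leads f s a s' b ↔ ∃ s'', Leads f s a s'' c ∧ Leads f s'' c s' b := by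
  constructor
  · rintro ⟨d, hd, hr⟩
    obtain ⟨d₁, hd₁⟩ := Int.eq_ofNat_of_zero_le (sub_nonneg.2 h1)
    obtain ⟨d₂, hd₂⟩ := Int.eq_ofNat_of_zero_le (sub_nonneg.2 h2)
    have hdd : d = d₁ + d₂ := by omega
    have hc : c = a + d₁ := by omega
    rw [hdd, rn_add, ← hc] at hr
    exact ⟨_, ⟨d₁, hc, rfl⟩, ⟨d₂, by omega, hr⟩⟩
  · rintro ⟨s'', ⟨d₁, h3, rfl⟩, ⟨d₂, h4, rfl⟩⟩
    refine ⟨d₁ + d₂, by push_cast; omega, ?_⟩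
    rw [rn_add, ← h3]

/-- The input at time `j`: for `k ∈ A` whether the threshold `τ k` has been reached, and the
constant `e k` for all other `k`. -/
def inp {κ : Type} (τ : κ → ℤ) (A : Finset κ) (e : κ → Prop) (j : ℤ) (k : κ) : Prop :=
  (k ∈ A ∧ τ k ≤ j) ∨ (k ∉ A ∧ e k)

/-- Reachability is definable for a finite-state machine whose input tells which thresholds have
been reached: cut the run at the thresholds; between them the machine is autonomous, so
the possible lengths of a run form an eventually periodic set. -/
theorem Df.machine [Finite σ] {κ : Type} [DecidableEq κ] (G : (κ → Prop) → σ → σ) {n : ℕ}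
    {τ : κ → (Fin n → ℝ) → ℤ} (hτ : ∀ k, TmZ (τ k)) (A : Finset κ) :
    ∀ (e : κ → Prop) (s s' : σ) {f g : (Fin n → ℝ) → ℤ}, TmZ f → TmZ g →
      Df fun v => Leads (fun j => G (inp (fun k => τ k v) A e j)) s (f v) s' (g v) := by
  induction A using Finset.induction_on with
  | empty =>
    intro e s s' f g hf hg
    obtain ⟨a, b, hab, heq⟩ := Finite.exists_ne_map_eq_of_infinite (fun d : ℕ => (G e)^[d])
    wlog hlt : a < b generalizing a b
    · exact this b a hab.symm heq.symm (by omega)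
    have := Df.periodic hf hg (E := fun d => (G e)^[d] s = s') (a := a) (p := b - a) (by omega) (by
      intro d hd
      have e1 : d + (b - a) = (d - a) + b := by omega
      have e2 : (G e)^[(d - a) + b] s = (G e)^[(d - a) + a] s := by
        rw [Function.iterate_add_apply, Function.iterate_add_apply]
        exact congrArg (fun h => (G e)^[d - a] (h s)) heq.symm
      rw [e1, e2, Nat.sub_add_cancel hd])
    refine this.congr fun v => ?_
    have : (fun j : ℤ => G (inp (fun k => τ k v) ∅ e j)) = fun _ => G e := by
      funext j
      congr 1
      funext k
      simp [inp]
    rw [this]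
    simp [Leads, rn_const]
  | insert k A hk ih =>
    intro e s s' f g hf hg
    have hT : ∀ (v : Fin n → ℝ) j, τ k v ≤ j → inp (fun k => τ k v) (insert k A) e j =
        inp (fun k => τ k v) A (Function.update e k True) j := by
      intro v j hj
      funext l
      by_cases hl : l = k
      · subst hl; simp [inp, hk, hj]
      · simp [inp, hl]
    have hF : ∀ (v : Fin n → ℝ) j, j < τ k v → inp (fun k => τ k v) (insert k A) e j =
        inp (fun k => τ k v) A (Function.update e k False) j := by
      intro v j hj
      funext l
      by_cases hl : l = k
      · subst hl; simp [inp, hk, hj]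
      · simp [inp, hl]
    have := (((Df.leZ (hτ k) hf).and (ih (Function.update e k True) s s' hf hg)).or
      ((Df.leZ hg (hτ k)).and (ih (Function.update e k False) s s' hf hg))).or
      (((Df.ltZ hf (hτ k)).and (Df.ltZ (hτ k) hg)).and
        (Df.exists_finite fun s'' => (ih (Function.update e k False) s s'' hf (hτ k)).and
          (ih (Function.update e k True) s'' s' (hτ k) hg)))
    refine this.congr fun v => ?_
    rcases le_or_gt (τ k v) (f v) with h | h
    · have h' : ¬ f v < τ k v := not_lt.2 h
      have cT : Leads (fun j => G (inp (fun k => τ k v) (insert k A) e j)) s (f v) s' (g v) ↔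
          Leads (fun j => G (inp (fun k => τ k v) A (Function.update e k True) j)) s (f v) s' (g v) :=
        Leads.congr fun j h1 _ => by rw [hT v j (h.trans h1)]
      rw [cT]
      constructor
      · exact fun hr => Or.inl (Or.inl ⟨h, hr⟩)
      · rintro ((⟨_, hr⟩ | ⟨hg', hr⟩) | ⟨⟨h1, _⟩, _⟩)
        · exact hr
        · -- the run is empty, so the input is irrelevant
          exact (Leads.congr fun j h1 h2 => absurd (h1.trans_lt h2) (by omega)).1 hr
        · exact absurd h1 h'
    · rcases le_or_gt (g v) (τ k v) with h' | h'
      · have cF : Leads (fun j => G (inp (fun k => τ k v) (insert k A) e j)) s (f v) s' (g v) ↔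
            Leads (fun j => G (inp (fun k => τ k v) A (Function.update e k False) j))
              s (f v) s' (g v) :=
          Leads.congr fun j _ h2 => by rw [hF v j (h2.trans_le h')]
        rw [cF]
        simp only [not_le.2 h, h', not_lt.2 h', true_and, false_and, and_false, false_or, or_false]
      · rw [Leads.split h.le h'.le]
        simp only [not_le.2 h, not_le.2 h', h, h', true_and, false_and, false_or]
        refine exists_congr fun s'' => ?_
        refine and_congr (Leads.congr fun j _ h2 => ?_) (Leads.congr fun j h1 _ => ?_)
        · rw [hF v j h2]
        · rw [hT v j h1]

end Machine

/-! ### The finite machine computing derivability -/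

section Info

variable {X ι : Type} (En : X → ℝ → Option ℕ → Multiset X → Prop) (tgt : ι → X) (K : ℕ)
  (U : Multiset ι) (τ : ℝ) (φ : ι → ℝ)

/-- Representatives modulo `1` of the distinguished times: the current time, the end time and the
target birth times. -/
def frs : Option (Option ι) → ℝ
  | none => 0
  | some none => τ
  | some (some i) => τ - φ i

/-- The position of `β` relative to all integer translates of the distinguished times. -/
noncomputable def cls (β : ℝ) (a : Option (Option ι)) : ℤ × ℤ :=
  (⌊β - frs τ φ a⌋, ⌈β - frs τ φ a⌉)

/-- The positions of birth times in `[-K, 0]`. -/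
abbrev Cl : Type := ↥(cls τ φ '' Set.Icc (-(K : ℝ)) 0)

theorem finite_Cl [Finite ι] (hτ : 0 ≤ τ ∧ τ < 1) (hφ : ∀ i, 0 ≤ φ i ∧ φ i < 1) :
    Finite (Cl K τ φ) := by
  have hb : ∀ a, -1 ≤ frs τ φ a ∧ frs τ φ a ≤ 1 := by
    rintro (_ | _ | i)
    · simp [frs]
    · simp only [frs]; exact ⟨by linarith, hτ.2.le⟩
    · have := hφ i
      simp only [frs]; constructor <;> linarith
  have hfin : (Set.univ.pi fun _ : Option (Option ι) =>
      (Set.Icc (-(K : ℤ) - 1) 1) ×ˢ (Set.Icc (-(K : ℤ) - 1) 1)).Finite :=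
    Set.Finite.pi fun _ => (Set.finite_Icc _ _).prod (Set.finite_Icc _ _)
  refine (hfin.subset ?_).to_subtype
  rintro _ ⟨β, ⟨h1, h2⟩, rfl⟩ a _
  have := hb a
  simp only [cls, Set.mem_prod, Set.mem_Icc]
  refine ⟨⟨Int.le_floor.2 ?_, Int.cast_le (R := ℝ).1 ((Int.floor_le _).trans ?_)⟩,
    ⟨Int.cast_le (R := ℝ).1 (le_trans ?_ (Int.le_ceil _)), Int.ceil_le.2 ?_⟩⟩ <;>
  · push_cast; linarith

/-- Possible values of `info`. -/
abbrev St : Type := X → {L : Multiset ι // L ≤ U} → (Cl K τ φ ⊕ ι ⊕ Unit) → Prop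

instance finite_sub : Finite {L : Multiset ι // L ≤ U} := by
  classical
  refine Set.Finite.to_subtype (s := {L | L ≤ U}) ?_
  refine (Multiset.finite_toSet (Multiset.powerset U)).subset fun L hL => ?_
  simpa using hL

/-- A finite description of which goals are derivable at time `0`: from clocks of value at most
`K`, by their position; from the clocks of the targets; from all other clocks. -/
def info (E : ℝ) (γ : ι → ℝ) : St (X := X) K U τ φ := fun A L c =>
  match c with
  | .inl c => ∃ β, -(K : ℝ) ≤ β ∧ β ≤ 0 ∧ cls τ φ β = c ∧ D En tgt E γ A β 0 L
  | .inr (.inl i) => γ i ≤ 0 ∧ D En tgt E γ A (γ i) 0 L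
  | .inr (.inr _) => ∃ β, β < -(K : ℝ) ∧ (∀ i, β ≠ γ i) ∧ D En tgt E γ A β 0 L

/-- The fractional parts of the parameters are those prescribed by `τ` and `φ`. -/
def Shape (E : ℝ) (γ : ι → ℝ) : Prop :=
  (∃ j : ℤ, E = τ + j) ∧ ∀ i, ∃ l : ℤ, γ i = τ - φ i + l

variable {En tgt K U τ φ}

/-- At time `0` only the position of the birth time `β` matters, not its exact value. -/
theorem D.cls_sim [Finite ι] (hK : Bdd K En) {E : ℝ} {γ : ι → ℝ} (hs : Shape τ φ E γ) {A : X}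
    {β β' : ℝ} {L : Multiset ι} (hc : cls τ φ β = cls τ φ β') (d : D En tgt E γ A β 0 L) :
    D En tgt E γ A β' 0 L := by
  refine d.sim hK ?_
  have hp : ∀ p ∈ insert ((0 : ℝ), (0 : ℝ)) (marks E E γ γ),
      p.1 = p.2 ∧ ∃ a, ∃ l : ℤ, p.1 = frs τ φ a + l := by
    simp only [marks, Set.mem_insert_iff, Set.mem_range]
    rintro p (rfl | rfl | ⟨i, rfl⟩)
    · exact ⟨rfl, none, 0, by simp [frs]⟩
    · exact ⟨rfl, some none, hs.1⟩
    · exact ⟨rfl, some (some i), hs.2 i⟩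
  have hc' : ∀ a, ⌊β - frs τ φ a⌋ = ⌊β' - frs τ φ a⌋ ∧ ⌈β - frs τ φ a⌉ = ⌈β' - frs τ φ a⌉ :=
    fun a => by simpa [cls] using congrFun hc a
  intro p hp' q hq' k
  rcases hp' with rfl | hp' <;> rcases hq' with rfl | hq'
  · constructor <;> intro <;> linarith
  · obtain ⟨e, a, l, ha⟩ := hp q hq'
    rw [← e, ha]
    have h1 : ∀ x : ℝ, x ≤ frs τ φ a + l + k ↔ ⌈x - frs τ φ a⌉ ≤ l + k := by
      intro x
      rw [Int.ceil_le]
      push_cast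
      constructor <;> intro <;> linarith
    simp only [h1, (hc' a).2]
  · obtain ⟨e, a, l, ha⟩ := hp p hp'
    rw [← e, ha]
    have h1 : ∀ x : ℝ, frs τ φ a + l ≤ x + k ↔ l - k ≤ ⌊x - frs τ φ a⌋ := by
      intro x
      rw [Int.le_floor]
      push_cast
      constructor <;> intro <;> linarith
    simp only [h1, (hc' a).1]
  · rw [(hp p hp').1, (hp q hq').1]

/-- One implication of `info_step`. -/
theorem info_step_aux [Finite ι] (hK : Bdd K En) {E E' : ℝ} {γ γ' : ι → ℝ}
    (hs' : Shape τ φ E' γ')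
    (h1 : E = E' ∨ (0 ≤ E ∧ 0 ≤ E'))
    (h2 : ∀ i, γ i = γ' i ∨ (γ i < -(K : ℝ) - 1 ∧ γ' i < -(K : ℝ) - 1) ∨ (0 < γ i ∧ 0 < γ' i))
    (h3 : ∀ i j, γ i = γ j → γ' i = γ' j)
    (hi : info En tgt K U τ φ E γ = info En tgt K U τ φ E' γ') (A : X) (L) (c)
    (h : info En tgt K U τ φ (E + 1) (fun i => γ i + 1) A L c) :
    info En tgt K U τ φ (E' + 1) (fun i => γ' i + 1) A L c := by
  have hi' : ∀ A L c, info En tgt K U τ φ E γ A L c → info En tgt K U τ φ E' γ' A L c := by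
    rw [hi]; exact fun _ _ _ => id
  have hKn : (0 : ℝ) ≤ K := Nat.cast_nonneg K
  have J1 : ∀ A, ∀ L ≤ U, ∀ β : ℝ, -(K : ℝ) ≤ β → β ≤ 0 →
      D En tgt E γ A β 0 L → D En tgt E' γ' A β 0 L := by
    intro A L hL β hb hb' d
    obtain ⟨β', _, _, hc, d'⟩ := hi' A ⟨L, hL⟩ (.inl ⟨cls τ φ β, β, ⟨hb, hb'⟩, rfl⟩)
      ⟨β, hb, hb', rfl, d⟩
    exact d'.cls_sim hK hs' hc
  have J2 : ∀ A, ∀ L ≤ U, ∀ i, γ i ≤ 0 →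
      D En tgt E γ A (γ i) 0 L → D En tgt E' γ' A (γ' i) 0 L :=
    fun A L hL i hg d => (hi' A ⟨L, hL⟩ (.inr (.inl i)) ⟨hg, d⟩).2
  have J3 : ∀ A, ∀ L ≤ U, ∀ β β' : ℝ, β < -(K : ℝ) → β' < -(K : ℝ) → (∀ i, β ≠ γ i) →
      (∀ i, β' ≠ γ' i) → D En tgt E γ A β 0 L → D En tgt E' γ' A β' 0 L := by
    intro A L hL β β' hb hb' hg _ d
    obtain ⟨β'', hb'', hg'', d''⟩ := hi' A ⟨L, hL⟩ (.inr (.inr ())) ⟨β, hb, hg, d⟩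
    exact d''.clip hK (by linarith) (by linarith) hg''
  have main : ∀ {β β' : ℝ}, β ≤ 0 → Mt K γ γ' (β - 1) (β' - 1) →
      D En tgt (E + 1) (fun i => γ i + 1) A β 0 L →
      D En tgt (E' + 1) (fun i => γ' i + 1) A β' 0 L := by
    intro β β' hb hm d
    have d1 : D En tgt E γ A (β - 1) (-1) L :=
      (D.translate hK 1).1 (by simpa using d)
    have d2 := D.strip hK h1 h2 h3 J1 J2 J3 d1 L.2 le_rfl (by norm_num) (by linarith) hm
    simpa using (D.translate hK 1).2 d2
  rcases c with ⟨c, hc⟩ | i | ⟨⟩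
  · obtain ⟨β, hb, hb', hcc, d⟩ := h
    exact ⟨β, hb, hb', hcc, main hb' (Or.inr (Or.inl ⟨rfl, by linarith⟩)) d⟩
  · obtain ⟨hg, d⟩ := h
    have hg' : γ' i + 1 ≤ 0 := by
      rcases h2 i with h | h | h
      · rwa [← h]
      · linarith [h.2]
      · linarith [h.1]
    exact ⟨hg', main hg (Or.inl ⟨i, by simp, by simp⟩) d⟩
  · obtain ⟨β, hb, hg, d⟩ := h
    obtain ⟨β', hb', hn⟩ := (Set.Iio_infinite (-(K : ℝ))).exists_notMem_finite
      (Set.finite_range fun i => γ' i + 1)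
    have hg' : ∀ i, β' ≠ γ' i + 1 := fun i hi => hn ⟨i, hi.symm⟩
    have hb'' : β' < -(K : ℝ) := hb'
    refine ⟨β', hb'', hg', main (by linarith) (Or.inr (Or.inr ⟨by linarith, by linarith,
      fun i hi => hg i (by linarith), fun i hi => hg' i (by linarith)⟩)) d⟩

/-- The description at time `-1` is determined by the description at time `0` and the shape of the
parameters near `[-1, 0]`. -/
theorem info_step [Finite ι] (hK : Bdd K En) {E E' : ℝ} {γ γ' : ι → ℝ}
    (hs : Shape τ φ E γ) (hs' : Shape τ φ E' γ')
    (h1 : E = E' ∨ (0 ≤ E ∧ 0 ≤ E'))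
    (h2 : ∀ i, γ i = γ' i ∨ (γ i < -(K : ℝ) - 1 ∧ γ' i < -(K : ℝ) - 1) ∨ (0 < γ i ∧ 0 < γ' i))
    (h3 : ∀ i j, γ i = γ j ↔ γ' i = γ' j)
    (hi : info En tgt K U τ φ E γ = info En tgt K U τ φ E' γ') :
    info En tgt K U τ φ (E + 1) (fun i => γ i + 1) =
      info En tgt K U τ φ (E' + 1) (fun i => γ' i + 1) := by
  funext A L c
  refine propext ⟨info_step_aux hK hs' h1 h2 (fun i j => (h3 i j).1) hi A L c,
    info_step_aux hK hs (h1.imp Eq.symm And.symm)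
      (fun i => (h2 i).imp Eq.symm (Or.imp And.symm And.symm)) (fun i j => (h3 i j).2) hi.symm A L c⟩

variable (En tgt K U τ φ) in
/-- The description when `j + τ` time units remain and target `i` ends with clock value
`m i + φ i`. -/
def infoAt (j : ℤ) (m : ι → ℤ) : St (X := X) K U τ φ :=
  info En tgt K U τ φ (j + τ) (fun i => (j + τ) - (m i + φ i))

/-- Thresholds for the time `j + K + 3`, for which all thresholds and the initial time are sums of
variables and nonnegative constants. -/
def thr (K : ℕ) (m : ι → ℤ) : Option (ι × Fin (K + 3)) → ℤ
  | none => (K + 3 : ℕ)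
  | some (i, k) => m i + (K + 4 - k : ℕ)

/-- The next description depends only on the present one and on the thresholds passed. -/
theorem infoAt_step [Finite ι] (hK : Bdd K En) (hτ : 0 ≤ τ ∧ τ < 1)
    (hφ : ∀ i, 0 ≤ φ i ∧ φ i < 1) {j j' : ℤ} {m m' : ι → ℤ} (hj : -1 ≤ j) (hj' : -1 ≤ j')
    (hb : ∀ k, thr K m k ≤ j + (K + 3) ↔ thr K m' k ≤ j' + (K + 3))
    (hm : ∀ i i', m i = m i' ↔ m' i = m' i')
    (hi : infoAt En tgt K U τ φ j m = infoAt En tgt K U τ φ j' m') :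
    infoAt En tgt K U τ φ (j + 1) m = infoAt En tgt K U τ φ (j' + 1) m' := by
  have shape : ∀ (j : ℤ) (m : ι → ℤ),
      Shape τ φ (j + τ) (fun i => ((j : ℝ) + τ) - (m i + φ i)) := fun j m =>
    ⟨⟨j, by ring⟩, fun i => ⟨j - m i, by push_cast; ring⟩⟩
  have eqp : ∀ (j : ℤ) (m : ι → ℤ) (i i' : ι),
      ((j : ℝ) + τ) - (m i + φ i) = ((j : ℝ) + τ) - (m i' + φ i') ↔ m i = m i' ∧ φ i = φ i' := by
    intro j m i i'
    constructor
    · intro h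
      have h4 := hφ i
      have h5 := hφ i'
      have h6 : ((m i : ℤ) : ℝ) - m i' = φ i' - φ i := by linarith
      have h7 : m i = m i' := by
        have a : m i - m i' < 1 := by
          have : ((m i - m i' : ℤ) : ℝ) < ((1 : ℤ) : ℝ) := by push_cast; linarith
          exact_mod_cast this
        have b : -1 < m i - m i' := by
          have : ((-1 : ℤ) : ℝ) < ((m i - m i' : ℤ) : ℝ) := by push_cast; linarith
          exact_mod_cast this
        omega
      refine ⟨h7, ?_⟩
      rw [h7] at h6
      linarith
    · rintro ⟨h, h'⟩; rw [h, h']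
  have := info_step (tgt := tgt) (U := U) hK (shape j m) (shape j' m') ?_ ?_ ?_ hi
  · convert this using 1
    · unfold infoAt
      congr 1
      · push_cast; ring
      · funext i; push_cast; ring
    · unfold infoAt
      congr 1
      · push_cast; ring
      · funext i; push_cast; ring
  · have h0 := hb none
    simp only [thr] at h0
    rcases le_or_gt 0 j with h | h
    · have h' : 0 ≤ j' := by push_cast at h0; omega
      have a : (0 : ℝ) ≤ j := by exact_mod_cast h
      have b : (0 : ℝ) ≤ j' := by exact_mod_cast h'
      right; constructor <;> linarith
    · have h' : j = j' := by push_cast at h0; omega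
      left; rw [h']
  · intro i
    have hfi := hφ i
    have hk : ∀ k : ℕ, k < K + 3 → (m i + 1 ≤ j + k ↔ m' i + 1 ≤ j' + k) := by
      intro k hk
      have := hb (some (i, ⟨k, hk⟩))
      simp only [thr] at this
      omega
    by_cases ha : m i + 1 ≤ j
    · right; right
      have a : (m i : ℝ) + 1 ≤ j := by exact_mod_cast ha
      have b : (m' i : ℝ) + 1 ≤ j' := by
        have := hk 0 (by omega)
        have : m' i + 1 ≤ j' := by simpa [ha] using this
        exact_mod_cast this
      constructor <;> linarith
    by_cases hz : m i + 1 ≤ j + (K + 2)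
    · left
      have : j - m i = j' - m' i := by
        obtain ⟨l, hl⟩ := Int.eq_ofNat_of_zero_le (show 0 ≤ m i + 1 - j by omega)
        have h1 := hk l (by omega)
        have h2 := hk (l - 1) (by omega)
        have : 1 ≤ l := by omega
        push_cast [this] at h2
        omega
      have : (j : ℝ) - m i = j' - m' i := by exact_mod_cast this
      linarith
    · right; left
      have h1 := hk (K + 2) (by omega)
      push_cast at h1
      have a : j + (K + 2) < m i + 1 := by omega
      have b : j' + (K + 2) < m' i + 1 := by omega
      have a' : (j : ℝ) + (K + 2) + 1 ≤ m i + 1 := by exact_mod_cast a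
      have b' : (j' : ℝ) + (K + 2) + 1 ≤ m' i + 1 := by exact_mod_cast b
      constructor <;> linarith
  · intro i i'
    rw [eqp, eqp, hm]

/-- With less than zero time left, nothing is derivable. -/
theorem infoAt_neg_one (hτ : 0 ≤ τ ∧ τ < 1) (m : ι → ℤ) :
    infoAt En tgt K U τ φ (-1) m = fun _ _ _ => False := by
  funext A L c
  refine eq_false fun h => ?_
  have key : ∀ {β}, ¬ D En tgt (((-1 : ℤ) : ℝ) + τ) (fun i => (((-1 : ℤ) : ℝ) + τ) - (m i + φ i))
      A β 0 L := by
    intro β d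
    have := d.le_end
    push_cast at this
    linarith
  rcases c with c | i | ⟨⟩
  · obtain ⟨β, _, _, _, d⟩ := h; exact key d
  · exact key h.2
  · obtain ⟨β, _, _, d⟩ := h; exact key d

/-- For fixed fractional parts and a fixed equality pattern of the integer parts, the descriptions
are computed by a machine that reads which thresholds have been reached. -/
theorem exists_machine [Finite ι] (hK : Bdd K En) (hτ : 0 ≤ τ ∧ τ < 1)
    (hφ : ∀ i, 0 ≤ φ i ∧ φ i < 1) (e : ι → ι → Prop) :
    ∃ G : (Option (ι × Fin (K + 3)) → Prop) → St (X := X) K U τ φ → St (X := X) K U τ φ,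
      ∀ m : ι → ℤ, (∀ i i', m i = m i' ↔ e i i') → ∀ d : ℕ,
        rn (fun J => G (fun k => thr K m k ≤ J)) (K + 2 : ℕ) d (fun _ _ _ => False) =
          infoAt En tgt K U τ φ (d - 1) m := by
  classical
  -- `Q b s z`: the pair `z` of a time and integer parts realizes input `b` and description `s`;
  -- by `infoAt_step` the successor description does not depend on the choice of `z`
  let Q := fun (b : Option (ι × Fin (K + 3)) → Prop) (s : St (X := X) K U τ φ)
    (z : ℤ × (ι → ℤ)) => -1 ≤ z.1 ∧ (∀ i i', z.2 i = z.2 i' ↔ e i i') ∧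
      (∀ k, thr K z.2 k ≤ z.1 + (K + 3) ↔ b k) ∧ infoAt En tgt K U τ φ z.1 z.2 = s
  let G := fun (b : Option (ι × Fin (K + 3)) → Prop) (s : St (X := X) K U τ φ) =>
    if h : ∃ z, Q b s z then infoAt En tgt K U τ φ (h.choose.1 + 1) h.choose.2 else s
  refine ⟨G, fun m hm d => ?_⟩
  induction d with
  | zero =>
    simp only [rn]
    rw [← infoAt_neg_one (En := En) (tgt := tgt) (K := K) (U := U) (φ := φ) hτ m]
    simp
  | succ d ih =>
    rw [rn_succ, ih]
    have hQ : Q (fun k => thr K m k ≤ ((K + 2 : ℕ) : ℤ) + d)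
        (infoAt En tgt K U τ φ (d - 1) m) ((d : ℤ) - 1, m) := by
      refine ⟨by simp only; omega, hm, fun k => ?_, rfl⟩
      have : (d : ℤ) - 1 + (K + 3) = ((K + 2 : ℕ) : ℤ) + d := by push_cast; ring
      simp only [this]
    have hex : ∃ z, Q (fun k => thr K m k ≤ ((K + 2 : ℕ) : ℤ) + d)
        (infoAt En tgt K U τ φ (d - 1) m) z := ⟨_, hQ⟩
    have hG : G (fun k => thr K m k ≤ ((K + 2 : ℕ) : ℤ) + d)
        (infoAt En tgt K U τ φ (d - 1) m) =
        infoAt En tgt K U τ φ (hex.choose.1 + 1) hex.choose.2 := dif_pos hex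
    rw [hG]
    obtain ⟨c1, c2, c3, c4⟩ := hex.choose_spec
    rw [infoAt_step hK hτ hφ c1 hQ.1 (fun k => (c3 k).trans (hQ.2.2.1 k).symm)
      (fun i i' => (c2 i i').trans (hm i i').symm) c4]
    congr 1
    push_cast; ring

end Info

section Core

variable {X ι : Type} {En : X → ℝ → Option ℕ → Multiset X → Prop} {tgt : ι → X} {K : ℕ}

/-- The reals whose fractional parts determine the type of `(t, v)`. -/
def fam (t : ℝ) (v : ι → ℝ) : Option (Option ι) → ℝ
  | none => 0
  | some none => t
  | some (some i) => v i

/-- The order type of the fractional parts, and the equality pattern of the integer parts. -/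
def HasTy (o : (Option (Option ι) → Option (Option ι) → Prop) × (ι → ι → Prop)) (t : ℝ)
    (v : ι → ℝ) : Prop :=
  (∀ a b, Int.fract (fam t v a) ≤ Int.fract (fam t v b) ↔ o.1 a b) ∧
    ∀ i i', ⌊v i⌋ = ⌊v i'⌋ ↔ o.2 i i'

/-- Parameters of the same type are related by a partial automorphism, so their fractional parts
may be replaced by those of a fixed representative. -/
theorem D.retype [Finite ι] (hK : Bdd K En) {o} {t t' : ℝ} {v v' : ι → ℝ} (h : HasTy o t v)
    (h' : HasTy o t' v') {A : X} {i₀ : ι} {L : Multiset ι} :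
    D En tgt 0 (fun i => -v i) A (-v i₀) (-t) L ↔
      D En tgt 0 (fun i => -(⌊v i⌋ + Int.fract (v' i))) A (-(⌊v i₀⌋ + Int.fract (v' i₀)))
        (-(⌊t⌋ + Int.fract t')) L := by
  refine D.sim_iff hK ?_
  have hp : ∀ p ∈ (insert (-v i₀, -(⌊v i₀⌋ + Int.fract (v' i₀)))
      (insert (-t, -(⌊t⌋ + Int.fract t')) (marks 0 0 (fun i => -v i)
        (fun i => -(⌊v i⌋ + Int.fract (v' i))))) : Set (ℝ × ℝ)),
      ∃ a, p = (-fam t v a, -(⌊fam t v a⌋ + Int.fract (fam t' v' a))) := by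
    simp only [marks, Set.mem_insert_iff, Set.mem_range]
    rintro p (rfl | rfl | rfl | ⟨i, rfl⟩)
    · exact ⟨some (some i₀), rfl⟩
    · exact ⟨some none, rfl⟩
    · exact ⟨none, by simp [fam]⟩
    · exact ⟨some (some i), rfl⟩
  intro p hp' q hq' k
  obtain ⟨a, rfl⟩ := hp p hp'
  obtain ⟨b, rfl⟩ := hp q hq'
  have e1 := Int.floor_add_fract (fam t v a)
  have e2 := Int.floor_add_fract (fam t v b)
  have e3 := (h.1 b a).trans (h'.1 b a).symm
  generalize hfa : Int.fract (fam t v a) = fa at *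
  generalize hfb : Int.fract (fam t v b) = fb at *
  have b1 : 0 ≤ fa ∧ fa < 1 := hfa ▸ ⟨Int.fract_nonneg _, Int.fract_lt_one _⟩
  have b2 : 0 ≤ fb ∧ fb < 1 := hfb ▸ ⟨Int.fract_nonneg _, Int.fract_lt_one _⟩
  have b3 := Int.fract_nonneg (fam t' v' a)
  have b4 := Int.fract_lt_one (fam t' v' a)
  have b5 := Int.fract_nonneg (fam t' v' b)
  have b6 := Int.fract_lt_one (fam t' v' b)
  simp only
  rcases lt_trichotomy ⌊fam t v b⌋ (⌊fam t v a⌋ + k) with hl | hl | hl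
  · have : (⌊fam t v b⌋ : ℝ) + 1 ≤ ⌊fam t v a⌋ + k := by exact_mod_cast hl
    constructor <;> intro <;> linarith
  · have : (⌊fam t v b⌋ : ℝ) = ⌊fam t v a⌋ + k := by exact_mod_cast hl
    constructor
    · intro hh
      have := e3.1 (by linarith)
      linarith
    · intro hh
      have := e3.2 (by linarith)
      linarith
  · have : (⌊fam t v a⌋ : ℝ) + k + 1 ≤ ⌊fam t v b⌋ := by exact_mod_cast hl
    constructor <;> intro <;> linarith

theorem Df.hasTy [Finite ι] {n : ℕ} {t : (Fin n → ℝ) → ℝ} {v : ι → (Fin n → ℝ) → ℝ} (ht : Tm t)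
    (hv : ∀ i, Tm (v i)) (o : (Option (Option ι) → Option (Option ι) → Prop) × (ι → ι → Prop)) :
    Df fun y => HasTy o (t y) (fun i => v i y) := by
  have hfam : ∀ a, Tm fun y => fam (t y) (fun i => v i y) a := by
    rintro (_ | _ | i)
    · exact (Tm.nat 0 : Tm fun _ : Fin n → ℝ => ((0 : ℕ) : ℝ)) |> fun h => by simpa [fam] using h
    · exact ht
    · exact hv i
  refine Df.and (Df.forall_finite fun a => Df.forall_finite fun b => ?_)
    (Df.forall_finite fun i => Df.forall_finite fun i' =>
      Df.eqZ_iff (hv i).floor (hv i').floor _)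
  refine (Df.le_iff ((hfam a).add (hfam b).floor) ((hfam b).add (hfam a).floor) (o.1 a b)).congr
    fun y => ?_
  rw [Int.fract, Int.fract, sub_le_sub_iff]

/-- Derivability with remaining time `t` and final clock values `v`, starting from a clock with the
birth time of target `i₀`, is definable. -/
theorem Df.core [Finite X] [Finite ι] (hK : Bdd K En) (A : X) (L : Multiset ι) (i₀ : ι) {n : ℕ}
    {t : (Fin n → ℝ) → ℝ} {v : ι → (Fin n → ℝ) → ℝ} (ht : Tm t) (hv : ∀ i, Tm (v i)) :
    Df fun y => (0 ≤ t y ∧ t y ≤ v i₀ y) ∧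
      D En tgt 0 (fun i => -v i y) A (-v i₀ y) (-t y) L := by
  classical
  have h0 : Df fun y => 0 ≤ t y ∧ t y ≤ v i₀ y :=
    Df.and ((Df.le (Tm.nat 0) ht).congr fun _ => by simp) (Df.le ht (hv i₀))
  suffices H : ∀ o, Df fun y => HasTy o (t y) (fun i => v i y) ∧ (0 ≤ t y ∧ t y ≤ v i₀ y) ∧
      D En tgt 0 (fun i => -v i y) A (-v i₀ y) (-t y) L by
    refine (Df.exists_finite H).congr fun y => ⟨fun h => ?_, fun ⟨o, _, h⟩ => h⟩
    exact ⟨(_, _), ⟨fun _ _ => Iff.rfl, fun _ _ => Iff.rfl⟩, h⟩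
  intro o
  -- a type without realization contributes nothing; otherwise a representative is fixed
  by_cases ho : ∃ t' v', HasTy (ι := ι) o t' v'
  swap
  · exact (Df.prop False).congr fun y => ⟨fun h => ho ⟨_, _, h.1⟩, False.elim⟩
  obtain ⟨t', v', ho⟩ := ho
  have hτ : 0 ≤ Int.fract t' ∧ Int.fract t' < 1 := ⟨Int.fract_nonneg _, Int.fract_lt_one _⟩
  have hφ : ∀ i, 0 ≤ Int.fract (v' i) ∧ Int.fract (v' i) < 1 :=
    fun i => ⟨Int.fract_nonneg _, Int.fract_lt_one _⟩
  obtain ⟨G, hG⟩ := exists_machine (X := X) (En := En) (tgt := tgt) (U := L) hK hτ hφ o.2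
  have : Finite (Cl K (Int.fract t') (fun i => Int.fract (v' i))) := finite_Cl _ _ _ hτ hφ
  cases nonempty_fintype ι
  have hthr : ∀ k, TmZ fun y => thr K (fun i => ⌊v i y⌋) k := by
    rintro (_ | ⟨i, k⟩)
    · exact TmZ.nat _
    · exact (hv i).floor.add (TmZ.nat _)
  have hM := fun s' => Df.machine G hthr Finset.univ (fun _ => False) (fun _ _ _ => False) s'
    (TmZ.nat (K + 2)) (ht.floor.add (TmZ.nat (K + 3)))
  refine ((Df.hasTy ht hv o).and (h0.and (Df.exists_finite (κ := {s : St (X := X) K L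
    (Int.fract t') (fun i => Int.fract (v' i)) // s A ⟨L, le_rfl⟩ (.inr (.inl i₀))})
    fun s => hM s.1))).congr fun y => ?_
  refine and_congr_right fun hty => and_congr_right fun hpos => ?_
  rw [D.retype hK hty ho]
  have hinp : (fun J => G (inp (fun k => thr K (fun i => ⌊v i y⌋) k) Finset.univ
      (fun _ => False) J)) = fun J => G (fun k => thr K (fun i => ⌊v i y⌋) k ≤ J) := by
    funext J
    congr 1
    funext k
    simp [inp]
  rw [hinp]
  obtain ⟨N, hN⟩ := Int.eq_ofNat_of_zero_le (Int.floor_nonneg.2 hpos.1)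
  have hrun := hG (fun i => ⌊v i y⌋) hty.2 (N + 1)
  have hle : (⌊t y⌋ : ℝ) + Int.fract t' ≤ ⌊v i₀ y⌋ + Int.fract (v' i₀) := by
    have a := (hty.1 (some none) (some (some i₀))).trans (ho.1 (some none) (some (some i₀))).symm
    simp only [fam] at a
    rcases (Int.floor_mono hpos.2).lt_or_eq with h | h
    · have : (⌊t y⌋ : ℝ) + 1 ≤ ⌊v i₀ y⌋ := by exact_mod_cast h
      linarith [hτ.2, (hφ i₀).1]
    · have b := a.1 (by
        rw [Int.fract, Int.fract, h]; linarith [hpos.2])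
      rw [h]; linarith
  have hinfo : infoAt En tgt K L (Int.fract t') (fun i => Int.fract (v' i)) N
      (fun i => ⌊v i y⌋) A ⟨L, le_rfl⟩ (.inr (.inl i₀)) ↔
      D En tgt 0 (fun i => -(⌊v i y⌋ + Int.fract (v' i))) A (-(⌊v i₀ y⌋ + Int.fract (v' i₀)))
        (-(⌊t y⌋ + Int.fract t')) L := by
    rw [← D.translate hK (⌊t y⌋ + Int.fract t')]
    simp only [infoAt, info, hN]
    rw [hN] at hle
    push_cast at hle ⊢
    rw [and_iff_right (by linarith)]
    simp only [zero_add, neg_add_cancel, neg_add_eq_sub]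
  rw [← hinfo]
  have hc : ((N + 1 : ℕ) : ℤ) - 1 = N := by push_cast; ring
  rw [hc] at hrun
  constructor
  · intro h
    exact ⟨⟨_, h⟩, N + 1, by rw [hN]; push_cast; ring, hrun⟩
  · rintro ⟨⟨s, hs⟩, d, hd, hr⟩
    have : d = N + 1 := by rw [hN] at hd; push_cast at hd; omega
    subst this
    rw [hrun] at hr
    simpa only [hr] using hs

end Core

/-! ### Runs and derivations -/

section Interface

open TBPPcore
open scoped NNReal

section Runs

variable {C X : Type}

theorem shift_add (t : ℝ≥0) (α β : Config C X) : shift t (α + β) = shift t α + shift t β :=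
  Multiset.map_add _ _ _

theorem shift_shift (s t : ℝ≥0) (α : Config C X) : shift s (shift t α) = shift (t + s) α := by
  simp [shift, Multiset.map_map, add_assoc]

theorem shift_zero (α : Config C X) : shift 0 α = α := by
  simp [shift]

variable [DecidableEq C] {B : TBPP C X}

theorem runElapse (α : Config C X) (t : ℝ≥0) : Run B α t (shift t α) := by
  simpa using (Run.refl α).tail (Step.elapse (B := B) α t)

theorem runTrans {α β δ : Config C X} {s t : ℝ≥0} (h : Run B α s β) (h' : Run B β t δ) :
    Run B α (s + t) δ := by
  induction h' with
  | refl => simpa using h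
  | tail _ st ih => rw [← add_assoc]; exact ih.tail st

/-- A run may be cut at any intermediate time. -/
theorem runSplit {β β' : Config C X} {r : ℝ≥0} (h : Run B β r β') :
    ∀ s t, r = s + t → ∃ β₁, Run B β s β₁ ∧ Run B β₁ t β' := by
  induction h with
  | refl =>
    intro s t e
    have : s = 0 ∧ t = 0 := by simpa using e.symm
    rw [this.1, this.2]
    exact ⟨_, .refl _, .refl _⟩
  | @tail δ δ' r₀ s₀ h₀ st ih =>
    intro s t e
    rcases le_total s r₀ with hs | hs
    · obtain ⟨d, rfl⟩ := exists_add_of_le hs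
      obtain ⟨β₁, h₁, h₂⟩ := ih s d rfl
      refine ⟨β₁, h₁, ?_⟩
      have : t = d + s₀ := by
        rw [add_assoc] at e
        exact (add_left_cancel e).symm
      rw [this]
      exact h₂.tail st
    · obtain ⟨d, rfl⟩ := exists_add_of_le hs
      have e' : s₀ = d + t := by
        rw [add_assoc] at e
        exact add_left_cancel e
      cases st with
      | elapse _ _ =>
        refine ⟨shift d δ, runTrans h₀ (runElapse _ _), ?_⟩
        rw [e', ← shift_shift]
        exact runElapse _ _
      | discrete η r μ hr hg =>
        have : d = 0 ∧ t = 0 := by simpa using e'.symm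
        rw [this.1, this.2, add_zero]
        exact ⟨_, by simpa using h₀.tail (.discrete η r μ hr hg), .refl _⟩

/-- Idle processes may be added to a run. -/
theorem runCarry {β β' : Config C X} {s : ℝ≥0} (h : Run B β s β') (α : Config C X) :
    Run B (α + β) s (shift s α + β') := by
  induction h with
  | refl => rw [shift_zero]; exact .refl _
  | tail _ st ih =>
    refine ih.tail ?_
    cases st with
    | elapse δ s =>
      rw [← shift_shift, ← shift_add]
      exact .elapse _ _
    | discrete η r μ hr hg =>
      rw [add_zero, ← add_assoc, ← add_assoc]
      exact .discrete _ r μ hr hg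

/-- Processes do not interact, so runs of equal duration may be interleaved. -/
theorem runPar {α α' : Config C X} {t : ℝ≥0} (h : Run B α t α') :
    ∀ {β β' : Config C X}, Run B β t β' → Run B (α + β) t (α' + β') := by
  induction h with
  | refl =>
    intro β β' h
    simpa [shift_zero] using runCarry h _
  | tail _ st ih =>
    intro β β' h'
    obtain ⟨β₁, h₁, h₂⟩ := runSplit h' _ _ rfl
    refine runTrans (ih h₁) ?_
    cases st with
    | elapse => exact runCarry h₂ _
    | discrete η r μ hr hg =>
      have h₃ := (Run.refl _).tail (Step.discrete (B := B) (η + β₁) r μ hr hg)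
      have h₄ := runCarry h₂ (η + r.rhs.map fun Y => (Y, applyUpdates μ r.update))
      rw [shift_zero] at h₄
      rw [add_right_comm _ β₁ (r.rhs.map _), add_right_comm] at h₃
      simpa using runTrans h₃ h₄

end Runs

/-- The net effect of a sequence of assignments to a single clock: `none` if its value is kept,
`some k` if the last constant assigned is `k`. -/
def eff (U : List (Assign Unit)) : Option ℕ :=
  U.foldl (fun o a => Sum.elim (fun _ => o) some a.rhs) none

theorem applyUpdates_eff (u : ℝ≥0) (U : List (Assign Unit)) :
    applyUpdates (cval u) U = cval ((eff U).elim u (fun k => (k : ℝ≥0))) := by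
  suffices H : ∀ o : Option ℕ, applyUpdates (cval (o.elim u (fun k => (k : ℝ≥0)))) U =
      cval ((U.foldl (fun o a => Sum.elim (fun _ => o) some a.rhs) o).elim u
        (fun k => (k : ℝ≥0))) from H none
  induction U with
  | nil => intro o; rfl
  | cons a U ih =>
    intro o
    simp only [applyUpdates, List.foldl_cons] at ih ⊢
    rw [← ih]
    congr 1
    obtain ⟨_, r⟩ := a
    funext c
    rcases r with r | k <;> simp [applyAssign, cval] <;> rfl

/-- Some rule of `ℬ` of the form `A → α` is enabled at clock value `x` and has effect `o`.
Negative `x` count as `0`; only `0 ≤ x` occurs. -/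
def Enab {X : Type} (ℬ : TBPP Unit X) (A : X) (x : ℝ) (o : Option ℕ) (α : Multiset X) : Prop :=
  ∃ r ∈ ℬ.rules, r.src = A ∧ GuardSat (cval x.toNNReal) r.guard ∧ eff r.update = o ∧ r.rhs = α

theorem cmp_sat_congr (c : Cmp) {x x' : ℝ} {k : ℕ}
    (h : (x ≤ k ↔ x' ≤ k) ∧ ((k : ℝ) ≤ x ↔ (k : ℝ) ≤ x')) :
    c.Sat x.toNNReal k ↔ c.Sat x'.toNNReal k := by
  have h1 : x.toNNReal ≤ k ↔ x'.toNNReal ≤ k := by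
    rw [Real.toNNReal_le_iff_le_coe, Real.toNNReal_le_iff_le_coe]
    simpa using h.1
  have h2 : (k : ℝ≥0) ≤ x.toNNReal ↔ (k : ℝ≥0) ≤ x'.toNNReal := by
    rcases Nat.eq_zero_or_pos k with rfl | hk
    · simp
    · have : (0 : ℝ≥0) < k := by exact_mod_cast hk
      rw [Real.le_toNNReal_iff_coe_le' this, Real.le_toNNReal_iff_coe_le' this]
      simpa using h.2
  cases c
  · simp only [Cmp.Sat, ← not_le, h2]
  · exact h1
  · simp only [Cmp.Sat, le_antisymm_iff, h1, h2]
  · exact h2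
  · simp only [Cmp.Sat, gt_iff_lt, ← not_le, h1]

theorem exists_bdd {X : Type} (ℬ : TBPP Unit X) : ∃ K, Bdd K (Enab ℬ) := by
  classical
  -- `K` is the sum of all constants occurring in the finitely many rules
  let c : Rule Unit X → ℕ := fun r => (r.guard.map GuardAtom.bound).sum + (eff r.update).getD 0
  have hc : ∀ r ∈ ℬ.rules, c r ≤ ∑ r ∈ ℬ.finite.toFinset, c r := fun r hr =>
    Finset.single_le_sum (f := c) (fun _ _ => Nat.zero_le _) (ℬ.finite.mem_toFinset.2 hr)
  refine ⟨∑ r ∈ ℬ.finite.toFinset, c r, ⟨?_, ?_⟩⟩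
  · rintro A x x' o α h ⟨r, hr, hA, hg, ho, hα⟩
    refine ⟨r, hr, hA, fun a ha => ?_, ho, hα⟩
    have hb : a.bound ≤ c r :=
      (List.le_sum_of_mem (List.mem_map_of_mem ha)).trans (Nat.le_add_right _ _)
    exact (cmp_sat_congr _ (h _ (hb.trans (hc r hr)))).1 (hg a ha)
  · rintro A x k α ⟨r, hr, hA, hg, ho, hα⟩
    refine le_trans ?_ (hc r hr)
    simp [c, ho]

section Equiv

variable {X ι : Type} {ℬ : TBPP Unit X} {tgt : ι → X} {E : ℝ} {γ : ι → ℝ}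

theorem upd_le (o : Option ℕ) {β w : ℝ} (h : β ≤ w) : upd o β w ≤ w := by
  cases o <;> simp [upd, h]

theorem toNNReal_upd (o : Option ℕ) (β w : ℝ) :
    (w - upd o β w).toNNReal = o.elim (w - β).toNNReal (fun k => (k : ℝ≥0)) := by
  cases o <;> simp [upd]

/-- A single rule application, with clocks read off from birth times. -/
theorem runRule {A : X} {β w : ℝ} {o : Option ℕ} {α : Multiset X} (e : Enab ℬ A (w - β) o α) :
    Run ℬ {(A, cval (w - β).toNNReal)} 0
      (α.map fun Y => (Y, cval (w - upd o β w).toNNReal)) := by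
  obtain ⟨r, hr, rfl, hg, rfl, rfl⟩ := e
  have := (Run.refl _).tail (.discrete (B := ℬ) 0 r _ hr hg)
  rw [toNNReal_upd, ← applyUpdates_eff]
  simpa using this

/-- A derivation yields a run. -/
theorem run_of_D {A : X} {β w : ℝ} {L : Multiset ι} (d : D (Enab ℬ) tgt E γ A β w L)
    (h : β ≤ w) :
    Run ℬ {(A, cval (w - β).toNNReal)} (E - w).toNNReal
      (L.map fun i => (tgt i, cval (E - γ i).toNNReal)) := by
  induction d with
  | fin i => simpa using Run.refl _
  | @elapse A β w w' L hw d ih =>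
    have h1 := runTrans (runElapse (B := ℬ) {(A, cval (w - β).toNNReal)} (w' - w).toNNReal)
      (δ := L.map fun i => (tgt i, cval (E - γ i).toNNReal)) (t := (E - w').toNNReal) (by
        convert ih (h.trans hw) using 2
        simp only [shift, Multiset.map_singleton]
        congr 2
        funext c
        simp only [cval]
        rw [← Real.toNNReal_add (by linarith) (by linarith)]
        congr 1; ring)
    rw [← Real.toNNReal_add (by linarith) (by linarith [d.le_end])] at h1
    simpa using h1
  | @r0 A β w o hw e =>
    have := runTrans (runRule e) (runElapse _ (E - w).toNNReal)
    simpa [shift] using this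
  | @r1 A B β w o L e d ih =>
    have := runTrans (runRule e) (by simpa using ih (upd_le o h))
    simpa using this
  | @r2 A B C β w o L₁ L₂ e d₁ d₂ ih₁ ih₂ =>
    have := runTrans (runRule e) (by
      simpa [Multiset.singleton_add] using runPar (ih₁ (upd_le o h)) (ih₂ (upd_le o h)))
      (δ := (L₁ + L₂).map fun i => (tgt i, cval (E - γ i).toNNReal)) (t := (E - w).toNNReal)
    simpa using this

/-- `Ls` distributes targets over the processes of `α`, such that each process, started at time `w`,
can evolve to the targets assigned to it. -/
abbrev Cert (ℬ : TBPP Unit X) (tgt : ι → X) (E : ℝ) (γ : ι → ℝ) (w : ℝ) (α : Config Unit X)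
    (Ls : Multiset (Multiset ι)) : Prop :=
  Multiset.Rel (fun p L => D (Enab ℬ) tgt E γ p.1 (w - p.2 ()) w L) α Ls

/-- Splittings can be pulled back along a transition. -/
theorem cert_step {α α' : Config Unit X} {s : ℝ≥0} (st : Step ℬ α s α') {w : ℝ}
    (hw : w ≤ E) {Ls : Multiset (Multiset ι)} (c : Cert ℬ tgt E γ w α' Ls) :
    ∃ Ls', Cert ℬ tgt E γ (w - s) α Ls' ∧ Ls'.sum = Ls.sum := by
  cases st with
  | elapse _ _ =>
    refine ⟨Ls, ?_, rfl⟩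
    rw [Cert, shift, Multiset.rel_map_left] at c
    refine c.mono fun p _ L _ d => ?_
    have e : w - ((p.2 () + s : ℝ≥0) : ℝ) = w - s - p.2 () := by push_cast; ring
    simp only [e] at d
    exact d.elapse (by simp)
  | discrete η r μ hr hg =>
    rw [Cert, Multiset.rel_add_left] at c
    obtain ⟨L₀, L₁, c₀, c₁, rfl⟩ := c
    suffices H : D (Enab ℬ) tgt E γ r.src (w - μ ()) w L₁.sum by
      refine ⟨L₀ + {L₁.sum}, ?_, by simp⟩
      rw [Cert, Multiset.rel_add_left]
      refine ⟨L₀, {L₁.sum}, by simpa using c₀, ?_, rfl⟩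
      refine Multiset.Rel.cons ?_ .zero
      simpa using H
    have hμ : μ = cval (μ ()) := by funext c; rfl
    have e : Enab ℬ r.src (w - (w - μ ())) (eff r.update) r.rhs := by
      refine ⟨r, hr, rfl, ?_, rfl, rfl⟩
      have : (w - (w - μ ())).toNNReal = μ () := by simp
      rwa [this, ← hμ]
    have hu : w - (applyUpdates μ r.update () : ℝ) = upd (eff r.update) (w - μ ()) w := by
      rw [hμ, applyUpdates_eff]
      cases eff r.update <;> simp [upd, cval]
    rw [Multiset.rel_map_left] at c₁
    simp only [hu] at c₁
    have h2 := ℬ.small r hr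
    generalize r.rhs = ρ at *
    have h3 : Multiset.card ρ = 0 ∨ Multiset.card ρ = 1 ∨ Multiset.card ρ = 2 := by omega
    rcases h3 with h3 | h3 | h3
    · rw [Multiset.card_eq_zero] at h3
      subst h3
      rw [Multiset.rel_zero_left] at c₁
      subst c₁
      exact .r0 hw e
    · obtain ⟨B, rfl⟩ := Multiset.card_eq_one.1 h3
      obtain ⟨M, Ms, d, c₂, rfl⟩ := Multiset.rel_cons_left.1 c₁
      rw [Multiset.rel_zero_left] at c₂
      subst c₂
      simpa using D.r1 e d
    · obtain ⟨B, C, rfl⟩ := Multiset.card_eq_two.1 h3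
      obtain ⟨M, Ms, d, c₂, rfl⟩ := Multiset.rel_cons_left.1 c₁
      obtain ⟨M', Ms', d', c₃, rfl⟩ := Multiset.rel_cons_left.1 c₂
      rw [Multiset.rel_zero_left] at c₃
      subst c₃
      simpa using D.r2 e d d'

theorem cert_run {α α' : Config Unit X} {t : ℝ≥0} (h : Run ℬ α t α') :
    ∀ {w : ℝ}, w ≤ E → ∀ {Ls : Multiset (Multiset ι)}, Cert ℬ tgt E γ w α' Ls →
    ∃ Ls', Cert ℬ tgt E γ (w - t) α Ls' ∧ Ls'.sum = Ls.sum := by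
  induction h with
  | refl => intro w _ Ls c; exact ⟨Ls, by simpa using c, rfl⟩
  | @tail α₁ α₂ t s _ st ih =>
    intro w hw Ls c
    obtain ⟨M, c₁, e₁⟩ := cert_step st hw c
    obtain ⟨M', c₂, e₂⟩ := ih (w := w - s) (by linarith [s.coe_nonneg]) c₁
    refine ⟨M', ?_, e₂.trans e₁⟩
    have : w - s - t = w - (t + s : ℝ≥0) := by push_cast; ring
    rwa [this] at c₂

/-- A run yields a derivation. -/
theorem D_of_run {A : X} {u t : ℝ≥0} {v : ι → ℝ≥0} {L : Multiset ι}
    (h : Run ℬ {(A, cval u)} t (L.map fun i => (tgt i, cval (v i))))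
    (hγ : ∀ i ∈ L, γ i = E - v i) : D (Enab ℬ) tgt E γ A (E - t - u) (E - t) L := by
  obtain ⟨M, c, e⟩ := cert_run (E := E) (γ := γ) (tgt := tgt) h le_rfl
    (Ls := L.map fun i => {i}) (by
      rw [Cert, Multiset.rel_map_left, Multiset.rel_map_right]
      refine Multiset.rel_refl_of_refl_on fun i hi => ?_
      have := D.fin (En := Enab ℬ) (tgt := tgt) (E := E) (γ := γ) i
      rwa [hγ i hi] at this)
  obtain ⟨N, Ns, d, c₂, rfl⟩ := Multiset.rel_cons_left.1 c
  rw [Multiset.rel_zero_left] at c₂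
  subst c₂
  have e' : N = L := by simpa [Multiset.sum_map_singleton] using e
  rw [← e']
  exact d

end Equiv

end Interface

end OneClock

open TBPPcore in
/-- for every one-clock TBPP `ℬ` (finitely many nonterminals)
and nonterminals `S, T₁, …, Tₙ`, the exact reachability relation
`{(u, v₁, …, vₙ) : {(S,u)} →* {(T₁,v₁), …, (Tₙ,vₙ)}}` is definable in
existential linear arithmetic. -/
theorem one_clock_TBPP_reachability_relation_ELA_definable
    (X : Type) [Fintype X] (ℬ : TBPP Unit X) (n : ℕ) (S : X) (T : Fin n → X) :
    ELA.Definable (n + 1) {w : Fin (n + 1) → ℝ |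
      ∃ (u : ℝ≥0) (v : Fin n → ℝ≥0),
        w 0 = (u : ℝ) ∧ (∀ i : Fin n, w i.succ = (v i : ℝ)) ∧
        Reach ℬ {(S, cval u)}
          (Multiset.map (fun i => (T i, cval (v i))) Finset.univ.val)} := by
  open OneClock in
  obtain ⟨K, hK⟩ := exists_bdd ℬ
  -- `none` indexes the clock of the initial process, `some i` the `i`-th target; the variable
  -- quantified last is the duration `t` of the run, which ends at absolute time `0`
  let tgt : Option (Fin n) → X := fun o => o.elim S T
  let f : Option (Fin n) → (Fin (n + 2) → ℝ) → ℝ := fun o y =>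
    o.elim (y (Fin.last (n + 1)) + y (Fin.castSucc 0)) (fun i => y i.succ.castSucc)
  have hf : ∀ o, Tm (f o) := by
    rintro (_ | i)
    · exact (Tm.var _).add (Tm.var _)
    · exact Tm.var _
  let L : Multiset (Option (Fin n)) := (Finset.univ : Finset (Fin n)).val.map some
  have h := (Df.core (tgt := tgt) hK S L none (Tm.var (Fin.last (n + 1))) hf).ex
  have h0 : Df fun w : Fin (n + 1) → ℝ => ∀ i, 0 ≤ w i :=
    Df.forall_finite fun i => (Df.le (Tm.nat 0) (Tm.var i)).congr fun _ => by simp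
  refine (h0.and h).congr fun w => ?_
  simp only [f, Fin.snoc_last, Fin.snoc_castSucc, Option.elim]
  constructor
  · rintro ⟨u, v, hu, hv, t, r⟩
    refine ⟨Fin.cases (hu ▸ u.2) fun i => hv i ▸ (v i).2, t, ⟨t.2, by simp [hu]⟩, ?_⟩
    have r' : Run ℬ {(S, cval u)} t
        (L.map fun o => (tgt o, cval (o.elim 0 v))) := by
      simpa [L, tgt, Multiset.map_map, Function.comp_def] using r
    have d := D_of_run (E := 0) (γ := fun o => -o.elim (t + w 0) (fun i => w i.succ)) r' (by
      rintro (_ | i) hi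
      · simp [L] at hi
      · simp [hv])
    convert d using 1
    · funext o
      cases o <;> rfl
    · rw [hu]; ring
    · ring
  · rintro ⟨hw, t, ⟨ht, -⟩, d⟩
    refine ⟨(w 0).toNNReal, fun i => (w i.succ).toNNReal, by simp [hw], fun i => by simp [hw],
      t.toNNReal, ?_⟩
    have r := run_of_D d (by linarith [hw 0])
    have e : -t - -(t + w 0) = w 0 := by ring
    rw [e] at r
    simpa [L, tgt, Multiset.map_map, Function.comp_def] using r
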